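/- Let u ∈ BC([0,T]×ℝⁿ) be a viscosity solution of ∂ₜu − F = 0 on (0,T)×ℝⁿ with u(0,·) ∈ BUC(ℝⁿ), where F satisfies the structural conditions (properness γ ≥ 0, condition (3.14), degenerate ellipticity) and F is bounded and uniformly continuous on sets where (u,p,X) remain bounded. Then u ∈ BUC([0,T]×ℝⁿ); moreover, for each η > 0 there exist constants C(η), K(η), independent of (t₀, x₀), such that |u(t,x₀) − u(t₀,x₀)| ≤ η + K(η)(t − t₀) for all 0 ≤ t₀ ≤ t ≤ T and all x₀ ∈ ℝⁿ. -/

import Mathlib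

open Set Filter Matrix

variable {n : ℕ}

/-- Time derivative `∂ₜφ` of a function on `ℝ × ℝⁿ`. -/
noncomputable def ptDeriv (φ : ℝ × EuclideanSpace ℝ (Fin n) → ℝ)
    (p : ℝ × EuclideanSpace ℝ (Fin n)) : ℝ :=
  fderiv ℝ φ p (1, 0)

/-- Spatial gradient `Dφ` of a function on `ℝ × ℝⁿ`. -/
noncomputable def pxGrad (φ : ℝ × EuclideanSpace ℝ (Fin n) → ℝ)
    (p : ℝ × EuclideanSpace ℝ (Fin n)) : EuclideanSpace ℝ (Fin n) :=
  (EuclideanSpace.equiv (Fin n) ℝ).symm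
    (fun i => fderiv ℝ φ p (0, EuclideanSpace.single i 1))

/-- Spatial Hessian `D²φ` of a function on `ℝ × ℝⁿ`, as a matrix. -/
noncomputable def pxHess (φ : ℝ × EuclideanSpace ℝ (Fin n) → ℝ)
    (p : ℝ × EuclideanSpace ℝ (Fin n)) : Matrix (Fin n) (Fin n) ℝ :=
  fun i j => fderiv ℝ (fun q => fderiv ℝ φ q (0, EuclideanSpace.single j 1)) p
    (0, EuclideanSpace.single i 1)

/-!
Let `S a` be the supremum of `u (t, x) - u (t, y) - 2 * η * t - a / 2 * ‖x - y‖ ^ 2`. It decreases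
in `a` and is bounded below, so along `a = 2 ^ k` some step changes it very little, and this forces
`a * ‖x - y‖ ^ 2` to be small at near-maximisers for that `a`. If such a maximum lay at `t > 0`, the
theorem on sums would supply second-order jets of `u` at `x` and at `y` for which (3.14) contradicts
the two viscosity inequalities; hence it lies at `t = 0`, where `u (0, ·)` is uniformly continuous.
So the functions `u (t, ·)` share a spatial modulus `ω + A * ‖x - y‖ ^ 2`.

This modulus makes `(A + 1) * ‖x - x₀‖ ^ 2 + K * (t - t₀)` a barrier: once `K` exceeds the bound of
`F` on the relevant bounded set, `u` minus the barrier has no maximum after `t₀`. Hence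
`u (t, x₀) ≤ u (t₀, x₀) + η + K * (t - t₀)`, and the same argument applied to `-u`, which solves the
reflected equation, gives the other inequality.

The theorem on sums rests on Jensen's lemma for the sup-convolutions. It is applied in a rescaled
time, where a single Euclidean penalty on space-time leaves the spatial penalty as it is and forces
the two times together.
-/

section ConvexTouching

open scoped Topology InnerProductSpace
open Asymptotics

variable {H : Type*} [NormedAddCommGroup H] [InnerProductSpace ℝ H]

/-- At `k`, the function `f` is touched from above by a paraboloid of opening `C` with slope `p`. -/
def TouchesAbove (f : H → ℝ) (C : ℝ) (k p : H) : Prop :=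
  ∀ e, f (k + e) ≤ f k + ⟪p, e⟫_ℝ + C * ‖e‖ ^ 2

/-- The second-order Taylor expansion of `f` at `x` with gradient `p` and Hessian `M`; no
derivative of `f` is assumed to exist away from `x`. -/
def HasQuadraticExpansionAt (f : H → ℝ) (p : H) (M : H →L[ℝ] H) (x : H) : Prop :=
  (fun h => f (x + h) - f x - ⟪p, h⟫_ℝ - 1 / 2 * ⟪M h, h⟫_ℝ) =o[𝓝 0] fun h => ‖h‖ ^ 2

lemma abs_inner_apply_self_le (M : H →L[ℝ] H) (h : H) : |⟪M h, h⟫_ℝ| ≤ ‖M‖ * ‖h‖ ^ 2 := by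
  calc |⟪M h, h⟫_ℝ| ≤ ‖M h‖ * ‖h‖ := abs_real_inner_le_norm _ _
    _ ≤ ‖M‖ * ‖h‖ * ‖h‖ := by gcongr; exact M.le_opNorm h
    _ = ‖M‖ * ‖h‖ ^ 2 := by ring

lemma tendsto_add_mul_nhdsGT_zero (c d : ℝ) :
    Tendsto (fun s : ℝ => c + s * d) (𝓝[>] 0) (𝓝 c) := by
  have h : Tendsto (fun s : ℝ => c + s * d) (𝓝 0) (𝓝 (c + 0 * d)) :=
    Continuous.tendsto (by fun_prop) 0
  rw [zero_mul, add_zero] at h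
  exact h.mono_left nhdsWithin_le_nhds

namespace TouchesAbove

variable {f : H → ℝ} {C : ℝ} {k k' p p' : H}

lemma add_inner_le (hf : ConvexOn ℝ univ f) (h : TouchesAbove f C k p) (e : H) :
    f k + ⟪p, e⟫_ℝ ≤ f (k + e) := by
  refine ge_of_tendsto (tendsto_add_mul_nhdsGT_zero (f (k + e)) (C * ‖e‖ ^ 2))
    (eventually_mem_nhdsWithin.mono fun s (hs : 0 < s) => ?_)
  have hcombo : (s / (1 + s)) • (k + e) + (1 / (1 + s)) • (k + (-s) • e) = k := by
    match_scalars <;> field_simp <;> ring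
  have hconv := hf.2 (mem_univ (k + e)) (mem_univ (k + (-s) • e))
    (show 0 ≤ s / (1 + s) by positivity) (show 0 ≤ 1 / (1 + s) by positivity)
    (by field_simp; ring)
  rw [hcombo, smul_eq_mul, smul_eq_mul] at hconv
  have hconv' : (1 + s) * f k ≤ s * f (k + e) + f (k + (-s) • e) := by
    calc (1 + s) * f k
        ≤ (1 + s) * (s / (1 + s) * f (k + e) + 1 / (1 + s) * f (k + (-s) • e)) := by gcongr
      _ = s * f (k + e) + f (k + (-s) • e) := by field_simp
  have habove := h ((-s) • e)
  rw [inner_smul_right, norm_smul, mul_pow, Real.norm_eq_abs, sq_abs] at habove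
  refine le_of_mul_le_mul_left (a := s) ?_ hs
  nlinarith

lemma apply_add_le (hf : ConvexOn ℝ univ f) (h : TouchesAbove f C k p) (y e : H) :
    f (y + e) ≤ f y + ⟪p, e⟫_ℝ + C * ‖y + e - k‖ ^ 2 := by
  have habove := h (y + e - k)
  have hbelow := h.add_inner_le hf (y - k)
  have hinner : ⟪p, y + e - k⟫_ℝ = ⟪p, y - k⟫_ℝ + ⟪p, e⟫_ℝ := by
    rw [← inner_add_right]; congr 1; abel
  rw [add_sub_cancel] at habove hbelow
  linarith

/-- The slope `p` minimises over `q` at distance `1 / (4 * C)` in the direction `p - p'`. -/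
lemma norm_sub_le (hf : ConvexOn ℝ univ f) (hC : 0 < C) (h : TouchesAbove f C k p)
    (h' : TouchesAbove f C k' p') : ‖p - p'‖ ≤ 4 * C * ‖k - k'‖ := by
  set s : ℝ := 1 / (4 * C) with hs
  have hbelow := h.add_inner_le hf (s • (p - p'))
  have habove := h'.apply_add_le hf k (s • (p - p'))
  have hinner : ⟪p, s • (p - p')⟫_ℝ - ⟪p', s • (p - p')⟫_ℝ = s * ‖p - p'‖ ^ 2 := by
    rw [← inner_sub_left, inner_smul_right, real_inner_self_eq_norm_sq]
  have hnorm : ‖k + s • (p - p') - k'‖ ≤ ‖k - k'‖ + s * ‖p - p'‖ := by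
    rw [add_sub_right_comm]
    refine (norm_add_le _ _).trans_eq ?_
    rw [norm_smul, Real.norm_of_nonneg (by positivity)]
  have hsq : s * ‖p - p'‖ ^ 2 ≤ C * (‖k - k'‖ + s * ‖p - p'‖) ^ 2 := by
    have : C * ‖k + s • (p - p') - k'‖ ^ 2 ≤ C * (‖k - k'‖ + s * ‖p - p'‖) ^ 2 := by gcongr
    linarith
  have hsq' : ‖p - p'‖ ^ 2 ≤ (2 * C * ‖k - k'‖ + ‖p - p'‖ / 2) ^ 2 := by
    calc ‖p - p'‖ ^ 2 = 4 * C * (s * ‖p - p'‖ ^ 2) := by rw [hs]; field_simp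
      _ ≤ 4 * C * (C * (‖k - k'‖ + s * ‖p - p'‖) ^ 2) := by gcongr
      _ = (2 * C * ‖k - k'‖ + ‖p - p'‖ / 2) ^ 2 := by rw [hs]; field_simp; ring
  have := le_of_sq_le_sq hsq' (by positivity)
  linarith

end TouchesAbove

lemma abs_rightDeriv_sub_le_of_convexOn {g : ℝ → ℝ} (hg : ConvexOn ℝ univ g) {s ε m c : ℝ}
    (hε : 0 < ε) (hright : g (s + ε) - g s ≤ ε * (m + c))
    (hleft : g (s - ε) - g s ≤ ε * (-m + c)) :
    |derivWithin g (Ioi s) s - m| ≤ c := by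
  have hup := hg.rightDeriv_le_slope_of_mem_interior (x := s) (y := s + ε) (by simp) (mem_univ _)
    (by linarith)
  have hlow := hg.slope_le_leftDeriv_of_mem_interior (x := s - ε) (y := s) (mem_univ _) (by simp)
    (by linarith)
  have hlr := hg.leftDeriv_le_rightDeriv_of_mem_interior (x := s) (by simp)
  rw [slope_def_field, add_sub_cancel_left, le_div_iff₀ hε] at hup
  rw [slope_def_field, sub_sub_cancel, div_le_iff₀ hε] at hlow
  rw [abs_le]
  constructor <;> by_contra! hcon <;> nlinarith

variable {f : H → ℝ} {C : ℝ} {K : Set H} {P : H → H} {x : H} {M : H →L[ℝ] H}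

lemma convexOn_comp_add_smul (hf : ConvexOn ℝ univ f) (x h : H) :
    ConvexOn ℝ univ fun s : ℝ => f (x + s • h) := by
  simpa [Function.comp_def, AffineMap.lineMap_apply, add_comm] using
    hf.comp_affineMap (AffineMap.lineMap x (x + h))

lemma abs_rightDeriv_lineMap_sub_le (hf : ConvexOn ℝ univ f) (hC : 0 < C) {ε : ℝ} (hε : 0 < ε)
    {k p h : H} {s : ℝ} (hk : TouchesAbove f C k p) (hkd : ‖k - (x + s • h)‖ ≤ ε * ‖h‖) :
    |derivWithin (fun s : ℝ => f (x + s • h)) (Ioi s) s - ⟪p, h⟫_ℝ| ≤ 4 * C * ε * ‖h‖ ^ 2 := by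
  have hincr : ∀ τ : ℝ, |τ| = ε →
      f (x + (s + τ) • h) - f (x + s • h) ≤ τ * ⟪p, h⟫_ℝ + ε * (4 * C * ε * ‖h‖ ^ 2) := by
    intro τ hτ
    have hdist : ‖x + s • h + τ • h - k‖ ≤ 2 * (ε * ‖h‖) := by
      have : x + s • h + τ • h - k = τ • h - (k - (x + s • h)) := by abel
      rw [this]
      refine (norm_sub_le _ _).trans ?_
      rw [norm_smul, Real.norm_eq_abs, hτ]
      linarith
    have hle := hk.apply_add_le hf (x + s • h) (τ • h)
    have : C * ‖x + s • h + τ • h - k‖ ^ 2 ≤ C * (2 * (ε * ‖h‖)) ^ 2 := by gcongr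
    rw [add_smul, ← add_assoc]
    rw [inner_smul_right] at hle
    linarith
  refine abs_rightDeriv_sub_le_of_convexOn (convexOn_comp_add_smul hf x h) hε ?_ ?_
  · linarith [hincr ε (abs_of_pos hε)]
  · have := hincr (-ε) (by rw [abs_neg, abs_of_pos hε])
    rw [← sub_eq_add_neg] at this
    linarith

lemma abs_inner_sub_le_of_fderivWithin {ε s : ℝ} {k h : H} (hε : 0 < ε) (hε1 : ε ≤ 1)
    (hs : s ∈ Icc (0 : ℝ) 1) (hkd : ‖k - (x + s • h)‖ ≤ ε * ‖h‖)
    (hPk : ‖P k - P x - M (k - x)‖ ≤ ε * ‖k - x‖) :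
    |⟪P k, h⟫_ℝ - (⟪P x, h⟫_ℝ + s * ⟪M h, h⟫_ℝ)| ≤ (2 + ‖M‖) * ε * ‖h‖ ^ 2 := by
  have hsplit : P k - P x - M (s • h) = (P k - P x - M (k - x)) + M (k - (x + s • h)) := by
    simp only [map_sub, map_add]; abel
  have hkx : ‖k - x‖ ≤ 2 * ‖h‖ := by
    have : k - x = (k - (x + s • h)) + s • h := by abel
    rw [this]
    refine (norm_add_le _ _).trans ?_
    rw [norm_smul, Real.norm_of_nonneg hs.1]
    nlinarith [norm_nonneg h, hs.2]
  have hnorm : ‖P k - P x - M (s • h)‖ ≤ (2 + ‖M‖) * ε * ‖h‖ := by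
    rw [hsplit]
    calc _ ≤ ε * ‖k - x‖ + ‖M‖ * ‖k - (x + s • h)‖ :=
          (norm_add_le _ _).trans (add_le_add hPk (M.le_opNorm _))
      _ ≤ ε * (2 * ‖h‖) + ‖M‖ * (ε * ‖h‖) := by gcongr
      _ = (2 + ‖M‖) * ε * ‖h‖ := by ring
  have hinner : ⟪P k, h⟫_ℝ - (⟪P x, h⟫_ℝ + s * ⟪M h, h⟫_ℝ) = ⟪P k - P x - M (s • h), h⟫_ℝ := by
    rw [inner_sub_left, inner_sub_left, map_smul, real_inner_smul_left]; ring
  rw [hinner]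
  calc _ ≤ ‖P k - P x - M (s • h)‖ * ‖h‖ := abs_real_inner_le_norm _ _
    _ ≤ (2 + ‖M‖) * ε * ‖h‖ * ‖h‖ := by gcongr
    _ = (2 + ‖M‖) * ε * ‖h‖ ^ 2 := by ring

lemma abs_sub_quadratic_le_of_abs_rightDeriv_sub_le {g : ℝ → ℝ} (hg : ConvexOn ℝ univ g)
    {a b c : ℝ} (hbound : ∀ s ∈ Ico (0 : ℝ) 1, |derivWithin g (Ioi s) s - (a + s * b)| ≤ c) :
    |g 1 - g 0 - a - 1 / 2 * b| ≤ c := by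
  have hcont : Continuous g := continuousOn_univ.1 (hg.continuousOn isOpen_univ)
  have hderiv : ∀ s : ℝ, HasDerivWithinAt (fun s => g s - s * a - 1 / 2 * s ^ 2 * b)
      (derivWithin g (Ioi s) s - (a + s * b)) (Ici s) s := by
    intro s
    have hg' : HasDerivWithinAt g (derivWithin g (Ioi s) s) (Ici s) s :=
      (hg.differentiableWithinAt_Ioi_of_mem_interior (by simp)).hasDerivWithinAt.Ici_of_Ioi
    have hlin : HasDerivAt (fun s : ℝ => s * a) a s := by
      simpa using (hasDerivAt_id s).mul_const a
    have hquad : HasDerivAt (fun s : ℝ => 1 / 2 * s ^ 2 * b) (s * b) s :=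
      (((hasDerivAt_pow 2 s).const_mul (1 / 2 : ℝ)).mul_const b).congr_deriv (by push_cast; ring)
    exact ((hg'.sub hlin.hasDerivWithinAt).sub hquad.hasDerivWithinAt).congr_deriv (by ring)
  have := norm_image_sub_le_of_norm_deriv_right_le_segment (by fun_prop)
    (fun s _ => hderiv s) (fun s hs => hbound s hs) 1 (right_mem_Icc.2 zero_le_one)
  rw [Real.norm_eq_abs] at this
  convert this using 2 <;> ring

/-- The right derivative of `f` along a segment from `x` is pinned by the slopes `P k` at nearby
contact points `k`, hence is `⟪P x, h⟫ + s ⟪M h, h⟫` up to `o(‖h‖²)`; then integrate in `s`. -/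
lemma hasQuadraticExpansionAt_of_touchesAbove (hf : ConvexOn ℝ univ f) (hC : 0 < C)
    (hK : ∀ k ∈ K, TouchesAbove f C k (P k)) (hM : HasFDerivWithinAt P M K x)
    (hdense : ∀ ε > (0 : ℝ), ∀ᶠ h in 𝓝 (0 : H), ∀ v, ‖v‖ ≤ ‖h‖ →
      ∃ k ∈ K, ‖k - (x + v)‖ ≤ ε * ‖h‖) :
    HasQuadraticExpansionAt f (P x) M x := by
  refine isLittleO_iff.2 fun ε hε => ?_
  set c := 4 * C + 2 + ‖M‖ with hc
  have hcpos : 0 < c := by positivity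
  set κ := min 1 (ε / c)
  have hκpos : 0 < κ := by positivity
  have hκc : c * κ ≤ ε := by
    calc c * κ ≤ c * (ε / c) := by gcongr; exact min_le_right _ _
      _ = ε := by field_simp
  obtain ⟨r, hr, hP⟩ := Metric.mem_nhdsWithin_iff.1 (hM.isLittleO.def hκpos)
  filter_upwards [hdense κ hκpos, Metric.ball_mem_nhds (0 : H) (half_pos hr)] with h hh hhr
  rw [mem_ball_zero_iff] at hhr
  have hslope : ∀ s ∈ Ico (0 : ℝ) 1, |derivWithin (fun s : ℝ => f (x + s • h)) (Ioi s) s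
      - (⟪P x, h⟫_ℝ + s * ⟪M h, h⟫_ℝ)| ≤ c * κ * ‖h‖ ^ 2 := by
    intro s hs
    have hsh : ‖s • h‖ ≤ ‖h‖ := by
      rw [norm_smul, Real.norm_of_nonneg hs.1]
      exact mul_le_of_le_one_left (norm_nonneg h) hs.2.le
    obtain ⟨k, hkK, hkd⟩ := hh (s • h) hsh
    have hkr : k ∈ Metric.ball x r := by
      have : k - x = (k - (x + s • h)) + s • h := by abel
      rw [mem_ball_iff_norm, this]
      refine (norm_add_le _ _).trans_lt ?_
      nlinarith [norm_nonneg h, min_le_left 1 (ε / c)]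
    have hline := abs_rightDeriv_lineMap_sub_le hf hC hκpos (hK k hkK) hkd
    have hgrad := abs_inner_sub_le_of_fderivWithin (P := P) (M := M) hκpos (min_le_left _ _)
      (Ico_subset_Icc_self hs) hkd (hP ⟨hkr, hkK⟩)
    refine (abs_sub_le _ ⟪P k, h⟫_ℝ _).trans ((add_le_add hline hgrad).trans_eq ?_)
    rw [hc]; ring
  have hexp := abs_sub_quadratic_le_of_abs_rightDeriv_sub_le (convexOn_comp_add_smul hf x h) hslope
  simp only [one_smul, zero_smul, add_zero] at hexp
  rw [Real.norm_eq_abs, Real.norm_of_nonneg (by positivity)]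
  exact hexp.trans (by gcongr)

end ConvexTouching

section Jensen

open scoped Topology InnerProductSpace Pointwise
open MeasureTheory

variable {H : Type*} [NormedAddCommGroup H] [InnerProductSpace ℝ H]
  {f : H → ℝ} {Q : H →L[ℝ] H}

/-- Pairs `(k, p)` such that `k`, close to `0`, is a maximum point of `f - ½⟪Q ·, ·⟫ - ⟪p, ·⟫`,
for a self-adjoint `Q`. These are the tilted maxima of Jensen's lemma. -/
def tiltedMaxima (f : H → ℝ) (Q : H →L[ℝ] H) (d δ : ℝ) : Set (H × H) :=
  {q | ‖q.1‖ ≤ d ∧ ‖q.2‖ ≤ δ ∧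
    ∀ e, f (q.1 + e) ≤ f q.1 + ⟪Q q.1 + q.2, e⟫_ℝ + 1 / 2 * ⟪Q e, e⟫_ℝ}

lemma TouchesAbove.of_mem_tiltedMaxima {d δ : ℝ} {k p : H} (h : (k, p) ∈ tiltedMaxima f Q d δ) :
    TouchesAbove f (‖Q‖ + 1) k (Q k + p) := by
  intro e
  have hQe := (abs_le.1 (abs_inner_apply_self_le Q e)).2
  have := h.2.2 e
  have : 0 ≤ ‖Q‖ * ‖e‖ ^ 2 := by positivity
  nlinarith

variable [FiniteDimensional ℝ H]

section Density

variable [MeasurableSpace H] [BorelSpace H] {μ : Measure H} [μ.IsAddHaarMeasure] {K : Set H}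
  {x : H}

lemma eventually_forall_exists_norm_sub_le_of_density_one (hx : x ∈ K)
    (hdens : Tendsto (fun r => μ (K ∩ Metric.closedBall x r) / μ (Metric.closedBall x r))
      (𝓝[>] 0) (𝓝 1)) {ε : ℝ} (hε : 0 < ε) :
    ∀ᶠ h in 𝓝 (0 : H), ∀ v, ‖v‖ ≤ ‖h‖ → ∃ k ∈ K, ‖k - (x + v)‖ ≤ ε * ‖h‖ := by
  obtain ⟨t, -, ht, hcover⟩ :=
    (isCompact_closedBall (0 : H) 1).finite_cover_balls (half_pos hε)
  have hmeet : ∀ᶠ r in 𝓝[>] (0 : ℝ), ∀ c ∈ t,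
      (K ∩ ({x} + r • Metric.ball c (ε / 2))).Nonempty :=
    (Filter.eventually_all_finite ht).2 fun c _ =>
      Measure.eventually_nonempty_inter_smul_of_density_one μ K x hdens _ measurableSet_ball
        (Metric.measure_ball_pos μ c (half_pos hε)).ne'
  have hmeet' := eventually_nhdsWithin_iff.1
    ((tendsto_norm_nhdsNE_zero (E := H)).eventually hmeet)
  filter_upwards [hmeet'] with h hh v hv
  rcases eq_or_ne h 0 with rfl | h0
  · obtain rfl : v = 0 := by simpa using hv
    exact ⟨x, hx, by simp⟩
  have hpos : 0 < ‖h‖ := norm_pos_iff.2 h0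
  have hunit : (1 / ‖h‖) • v ∈ Metric.closedBall (0 : H) 1 := by
    rwa [mem_closedBall_zero_iff, norm_smul, Real.norm_of_nonneg (by positivity),
      one_div_mul_eq_div, div_le_one hpos]
  obtain ⟨c, hc, hvc⟩ := mem_iUnion₂.1 (hcover hunit)
  obtain ⟨k, hkK, hk⟩ := hh h0 c hc
  obtain ⟨_, ha, _, ⟨y, hy, rfl⟩, rfl⟩ := Set.mem_add.1 hk
  rw [mem_singleton_iff.1 ha] at hkK
  refine ⟨_, hkK, ?_⟩
  have hsub : x + ‖h‖ • y - (x + v) = ‖h‖ • (y - (1 / ‖h‖) • v) := by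
    rw [smul_sub, smul_smul, mul_one_div_cancel hpos.ne', one_smul]; abel
  rw [hsub, norm_smul, norm_norm, mul_comm, ← dist_eq_norm]
  gcongr
  have := dist_triangle_right y ((1 / ‖h‖) • v) c
  rw [Metric.mem_ball] at hy hvc
  linarith

lemma exists_differentiableWithinAt_density_one {f : H → H} {L : NNReal}
    (hK : MeasurableSet K) (hμK : μ K ≠ 0) (hf : LipschitzOnWith L f K) :
    ∃ k ∈ K, DifferentiableWithinAt ℝ f K k ∧
      Tendsto (fun r => μ (K ∩ Metric.closedBall k r) / μ (Metric.closedBall k r))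
        (𝓝[>] 0) (𝓝 1) := by
  by_contra! hcon
  refine hμK ((measure_eq_zero_iff_ae_notMem).2 ?_)
  filter_upwards [hf.ae_differentiableWithinAt_of_mem (μ := μ),
    Besicovitch.ae_tendsto_measure_inter_div_of_measurableSet μ hK] with k hdiff hdens hkK
  rw [indicator_of_mem hkK] at hdens
  exact hcon k hkK (hdiff hkK) hdens

lemma hausdorffMeasure_ne_zero_of_ball_subset_image {f : H → H} {L : NNReal} {c : H} {δ : ℝ}
    (hδ : 0 < δ) (hf : LipschitzOnWith L f K) (hball : Metric.ball c δ ⊆ f '' K) :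
    Measure.hausdorffMeasure (Module.finrank ℝ H : ℝ) K ≠ 0 := by
  have := isAddHaarMeasure_hausdorffMeasure (E := H)
  intro h0
  have himage := hf.hausdorffMeasure_image_le (d := (Module.finrank ℝ H : ℝ)) (by positivity)
  rw [h0, mul_zero] at himage
  exact (Metric.measure_ball_pos (Measure.hausdorffMeasure (Module.finrank ℝ H : ℝ)) c hδ).ne'
    (measure_mono_null hball (le_antisymm himage zero_le))

end Density

lemma isCompact_tiltedMaxima (hf : Continuous f) (d δ : ℝ) : IsCompact (tiltedMaxima f Q d δ) := by
  refine ((isCompact_closedBall (0 : H) d).prod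
    (isCompact_closedBall (0 : H) δ)).of_isClosed_subset ?_ fun q hq =>
      ⟨mem_closedBall_zero_iff.2 hq.1, mem_closedBall_zero_iff.2 hq.2.1⟩
  simp only [tiltedMaxima, ofPred_and, ofPred_forall]
  exact (isClosed_le (by fun_prop) (by fun_prop)).inter
    ((isClosed_le (by fun_prop) (by fun_prop)).inter
      (isClosed_iInter fun e => isClosed_le (by fun_prop) (by fun_prop)))

lemma exists_mem_tiltedMaxima (hf : Continuous f) (hQ : IsSelfAdjoint Q) {ρ d : ℝ} (hρ : 0 ≤ ρ)
    (hd : 0 ≤ d)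
    (hmax : ∀ h, f h ≤ f 0 + 1 / 2 * ⟪Q h, h⟫_ℝ - ρ * ‖h‖ ^ 2) {p : H} (hp : ‖p‖ ≤ ρ * d) :
    ∃ k, (k, p) ∈ tiltedMaxima f Q d (ρ * d) := by
  set g : H → ℝ := fun h => f h - 1 / 2 * ⟪Q h, h⟫_ℝ - ⟪p, h⟫_ℝ with hg
  have hgc : Continuous g := by fun_prop
  obtain ⟨k, hk, hkmax⟩ := (isCompact_closedBall (0 : H) d).exists_isMaxOn
    ⟨0, Metric.mem_closedBall_self hd⟩ hgc.continuousOn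
  have hglobal : ∀ h, g h ≤ g k := by
    intro h
    by_cases hh : h ∈ Metric.closedBall (0 : H) d
    · exact hkmax hh
    refine le_trans ?_ (hkmax (Metric.mem_closedBall_self hd))
    rw [mem_closedBall_zero_iff, not_le] at hh
    have hinner := (abs_le.1 (abs_real_inner_le_norm p h)).1
    have : ‖p‖ * ‖h‖ ≤ ρ * ‖h‖ * ‖h‖ := by
      gcongr
      exact hp.trans (by gcongr)
    simp only [hg, map_zero, inner_zero_right]
    linarith [hmax h]
  refine ⟨k, mem_closedBall_zero_iff.1 hk, hp, fun e => ?_⟩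
  have hke := hglobal (k + e)
  have hsymm : ⟪Q e, k⟫_ℝ = ⟪Q k, e⟫_ℝ := (hQ.isSymmetric e k).trans (real_inner_comm _ _)
  simp only [hg, map_add, inner_add_left, inner_add_right] at hke ⊢
  linarith

/-- A quadratic form does not see the antisymmetric part of its operator. -/
lemma HasQuadraticExpansionAt.selfAdjointPart {p x : H} {M : H →L[ℝ] H}
    (h : HasQuadraticExpansionAt f p M x) :
    HasQuadraticExpansionAt f p (_root_.selfAdjointPart ℝ M : H →L[ℝ] H) x := by
  have hform : ∀ e, ⟪(_root_.selfAdjointPart ℝ M : H →L[ℝ] H) e, e⟫_ℝ = ⟪M e, e⟫_ℝ := by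
    intro e
    simp only [selfAdjointPart_apply_coe, _root_.smul_apply, _root_.add_apply,
      ContinuousLinearMap.star_eq_adjoint, inner_add_left, real_inner_smul_left,
      ContinuousLinearMap.adjoint_inner_left, real_inner_comm (M e) e]
    norm_num
    ring
  simpa only [HasQuadraticExpansionAt, hform] using h

/-- **Jensen's lemma** combined with Alexandrov's theorem: the slopes of the tilted maxima fill a
ball and depend Lipschitz-continuously on the maxima, so these form a set of positive measure. -/
theorem exists_mem_tiltedMaxima_hasQuadraticExpansionAt (hf : ConvexOn ℝ univ f)
    (hQ : IsSelfAdjoint Q) {ρ d : ℝ} (hρ : 0 < ρ) (hd : 0 < d)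
    (hmax : ∀ h, f h ≤ f 0 + 1 / 2 * ⟪Q h, h⟫_ℝ - ρ * ‖h‖ ^ 2) :
    ∃ (k p : H) (M : H →L[ℝ] H), (k, p) ∈ tiltedMaxima f Q d (ρ * d) ∧ IsSelfAdjoint M ∧
      HasQuadraticExpansionAt f (Q k + p) M k := by
  borelize H
  have hfc : Continuous f := continuousOn_univ.1 (hf.continuousOn isOpen_univ)
  set K : Set H := Prod.fst '' tiltedMaxima f Q d (ρ * d)
  have hKmeas : MeasurableSet K :=
    ((isCompact_tiltedMaxima hfc _ _).image continuous_fst).measurableSet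
  have htilt : ∀ k ∈ K, ∃ p, (k, p) ∈ tiltedMaxima f Q d (ρ * d) := by
    rintro _ ⟨⟨k, p⟩, h, rfl⟩; exact ⟨p, h⟩
  choose! tilt htilt using htilt
  have hC : 0 < ‖Q‖ + 1 := by positivity
  have htouch : ∀ k ∈ K, TouchesAbove f (‖Q‖ + 1) k (Q k + tilt k) := fun k hk =>
    .of_mem_tiltedMaxima (htilt k hk)
  have hslopeLip : LipschitzOnWith (4 * (‖Q‖₊ + 1)) (fun k => Q k + tilt k) K :=
    LipschitzOnWith.of_dist_le_mul fun k hk k' hk' => by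
      rw [dist_eq_norm, dist_eq_norm]
      exact (htouch k hk).norm_sub_le hf hC (htouch k' hk')
  have htiltLip : LipschitzOnWith (4 * (‖Q‖₊ + 1) + ‖Q‖₊) tilt K := by
    simpa using hslopeLip.sub Q.lipschitz.lipschitzOnWith
  have hball : Metric.ball 0 (ρ * d) ⊆ tilt '' K := by
    intro p hp
    obtain ⟨k, hk⟩ := exists_mem_tiltedMaxima hfc hQ hρ.le hd.le hmax (mem_ball_zero_iff.1 hp).le
    have hkK : k ∈ K := ⟨_, hk, rfl⟩
    have := (htouch k hkK).norm_sub_le hf hC (.of_mem_tiltedMaxima hk)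
    rw [sub_self, norm_zero, mul_zero, add_sub_add_left_eq_sub, norm_le_zero_iff, sub_eq_zero]
      at this
    exact ⟨k, hkK, this⟩
  have := isAddHaarMeasure_hausdorffMeasure (E := H)
  obtain ⟨k, hkK, hdiff, hdens⟩ := exists_differentiableWithinAt_density_one hKmeas
    (hausdorffMeasure_ne_zero_of_ball_subset_image (mul_pos hρ hd) htiltLip hball) hslopeLip
  exact ⟨k, tilt k, _, htilt k hkK, (_root_.selfAdjointPart ℝ _).2,
    (hasQuadraticExpansionAt_of_touchesAbove hf hC htouch hdiff.hasFDerivWithinAt fun _ hε =>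
      eventually_forall_exists_norm_sub_le_of_density_one hkK hdens hε).selfAdjointPart⟩

end Jensen

section SecondOrderLimits

open scoped Topology InnerProductSpace
open Asymptotics ContinuousLinearMap

variable {H : Type*} [NormedAddCommGroup H] [InnerProductSpace ℝ H]

lemma norm_le_of_isSelfAdjoint_of_abs_inner_le [CompleteSpace H] {M : H →L[ℝ] H}
    (hM : IsSelfAdjoint M) {C : ℝ} (hC : 0 ≤ C) (h : ∀ x, |⟪M x, x⟫_ℝ| ≤ C * ‖x‖ ^ 2) :
    ‖M‖ ≤ C := by
  rw [M.norm_eq_iSup_rayleighQuotient hM.isSymmetric]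
  refine ciSup_le fun x => ?_
  rw [rayleighQuotient, abs_div, abs_of_nonneg (sq_nonneg ‖x‖)]
  exact div_le_of_le_mul₀ (sq_nonneg _) hC (h x)

lemma isSelfAdjoint_add_smul_id [CompleteSpace H] {M : H →L[ℝ] H} (hM : IsSelfAdjoint M) (c : ℝ) :
    IsSelfAdjoint (M + c • ContinuousLinearMap.id ℝ H) :=
  hM.add (.smul (.all c) (.one _))

lemma inner_add_smul_id_apply_self (M : H →L[ℝ] H) (c : ℝ) (h : H) :
    ⟪(M + c • ContinuousLinearMap.id ℝ H) h, h⟫_ℝ = ⟪M h, h⟫_ℝ + c * ‖h‖ ^ 2 := by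
  simp [inner_add_left, real_inner_smul_left]

namespace HasQuadraticExpansionAt

variable {f : H → ℝ} {p x : H} {M : H →L[ℝ] H}

lemma tendsto_div_sq (hf : HasQuadraticExpansionAt f p M x) (h : H) :
    Tendsto (fun s : ℝ => (f (x + s • h) - f x - s * ⟪p, h⟫_ℝ) / s ^ 2) (𝓝[>] 0)
      (𝓝 (1 / 2 * ⟪M h, h⟫_ℝ)) := by
  have hzero : Tendsto (fun s : ℝ => s • h) (𝓝[>] 0) (𝓝 0) := by
    refine (Continuous.tendsto' ?_ 0 0 (zero_smul ℝ h)).mono_left nhdsWithin_le_nhds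
    fun_prop
  have hbound : (fun s : ℝ => ‖s • h‖ ^ 2) =O[𝓝[>] 0] fun s : ℝ => s ^ 2 :=
    .of_bound (‖h‖ ^ 2) (.of_forall fun s => by simp [norm_smul, mul_pow, mul_comm])
  have hlim := (((hf.comp_tendsto hzero).trans_isBigO hbound).tendsto_div_nhds_zero).add_const
    (1 / 2 * ⟪M h, h⟫_ℝ)
  rw [zero_add] at hlim
  refine hlim.congr' (eventually_mem_nhdsWithin.mono fun s (hs : 0 < s) => ?_)
  simp only [Function.comp_apply, map_smul, real_inner_smul_left, inner_smul_right]
  field_simp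
  ring

lemma inner_apply_self_le (hf : HasQuadraticExpansionAt f p M x) {Q : H →L[ℝ] H}
    (hQ : ∀ e, f (x + e) ≤ f x + ⟪p, e⟫_ℝ + 1 / 2 * ⟪Q e, e⟫_ℝ) (h : H) :
    ⟪M h, h⟫_ℝ ≤ ⟪Q h, h⟫_ℝ := by
  have : 1 / 2 * ⟪M h, h⟫_ℝ ≤ 1 / 2 * ⟪Q h, h⟫_ℝ := by
    refine le_of_tendsto (hf.tendsto_div_sq h)
      (eventually_mem_nhdsWithin.mono fun s (hs : 0 < s) => ?_)
    rw [div_le_iff₀ (by positivity)]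
    have := hQ (s • h)
    simp only [map_smul, real_inner_smul_left, inner_smul_right] at this
    linarith
  linarith

lemma inner_apply_self_nonneg (hf : HasQuadraticExpansionAt f p M x)
    (hp : ∀ e, f x + ⟪p, e⟫_ℝ ≤ f (x + e)) (h : H) : 0 ≤ ⟪M h, h⟫_ℝ := by
  have : 0 ≤ 1 / 2 * ⟪M h, h⟫_ℝ := by
    refine ge_of_tendsto (hf.tendsto_div_sq h)
      (eventually_mem_nhdsWithin.mono fun s (hs : 0 < s) => ?_)
    have := hp (s • h)
    rw [inner_smul_right] at this
    exact div_nonneg (by linarith) (by positivity)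
  linarith

lemma eq_of_add_inner_le (hf : HasQuadraticExpansionAt f p M x) {q : H}
    (hq : ∀ e, f x + ⟪q, e⟫_ℝ ≤ f (x + e)) : p = q := by
  have hle : ⟪q - p, q - p⟫_ℝ ≤ 0 := by
    have hlim := (hf.tendsto_div_sq (q - p)).mul
      (tendsto_id.mono_left nhdsWithin_le_nhds : Tendsto (id : ℝ → ℝ) (𝓝[>] 0) (𝓝 0))
    rw [mul_zero] at hlim
    refine ge_of_tendsto hlim (eventually_mem_nhdsWithin.mono fun s (hs : 0 < s) => ?_)
    have hqs := hq (s • (q - p))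
    rw [inner_smul_right] at hqs
    rw [id, inner_sub_left, div_mul_eq_mul_div, le_div_iff₀ (by positivity)]
    nlinarith
  exact (sub_eq_zero.1 (inner_self_eq_zero.1 (hle.antisymm real_inner_self_nonneg))).symm

lemma comp_isometry {E : Type*} [NormedAddCommGroup E] [InnerProductSpace ℝ E] [CompleteSpace E]
    [CompleteSpace H] (hf : HasQuadraticExpansionAt f p M x) {g : E → ℝ} {y : E} {A : E →L[ℝ] H}
    (hA : ∀ h, ‖A h‖ = ‖h‖) (hg : ∀ h, f (x + A h) - f x = g (y + h) - g y) :
    HasQuadraticExpansionAt g (adjoint A p) (adjoint A ∘L M ∘L A) y := by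
  have hcomp := hf.comp_tendsto (A.continuous.tendsto' 0 0 (map_zero A))
  simpa only [HasQuadraticExpansionAt, Function.comp_def, hg, hA, adjoint_inner_left,
    ContinuousLinearMap.comp_apply] using hcomp

end HasQuadraticExpansionAt

section LimitingExpansion

/-- Points of second-order expandability of `f`, with the gradient and the (self-adjoint) Hessian
of the expansion. -/
def expansionGraph [CompleteSpace H] (f : H → ℝ) : Set (H × H × (H →L[ℝ] H)) :=
  {q | IsSelfAdjoint q.2.2 ∧ HasQuadraticExpansionAt f q.2.1 q.2.2 q.1}

variable [FiniteDimensional ℝ H] {f : H → ℝ} {Q : H →L[ℝ] H}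

lemma exists_mem_expansionGraph_near_max (hf : ConvexOn ℝ univ f) (hQ : IsSelfAdjoint Q) {x₀ : H}
    (hmax : ∀ x, f x - 1 / 2 * ⟪Q x, x⟫_ℝ ≤ f x₀ - 1 / 2 * ⟪Q x₀, x₀⟫_ℝ) {ε : ℝ} (hε : 0 < ε) :
    ∃ x p M, (x, p, M) ∈ expansionGraph f ∧ ‖x - x₀‖ ≤ ε ∧ ‖p - Q x₀‖ ≤ ε ∧
      ∀ h, 0 ≤ ⟪M h, h⟫_ℝ ∧ ⟪M h, h⟫_ℝ ≤ ⟪Q h, h⟫_ℝ + ε * ‖h‖ ^ 2 := by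
  set Q' : H →L[ℝ] H := Q + ε • ContinuousLinearMap.id ℝ H
  have hQ's : IsSelfAdjoint Q' := isSelfAdjoint_add_smul_id hQ ε
  have hQ'inner : ∀ h, ⟪Q' h, h⟫_ℝ = ⟪Q h, h⟫_ℝ + ε * ‖h‖ ^ 2 :=
    inner_add_smul_id_apply_self Q ε
  set g : H → ℝ := fun h => f (x₀ + h) - ⟪Q x₀, h⟫_ℝ with hg
  have hgconv : ConvexOn ℝ univ g :=
    (by simpa [Function.comp_def] using hf.translate_right x₀ :
      ConvexOn ℝ univ fun h => f (x₀ + h)).sub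
      ((innerₛₗ ℝ (Q x₀)).concaveOn convex_univ)
  have hgmax : ∀ h, g h ≤ g 0 + 1 / 2 * ⟪Q' h, h⟫_ℝ - ε / 2 * ‖h‖ ^ 2 := fun h => by
    have := hmax (x₀ + h)
    have hsymm : ⟪Q h, x₀⟫_ℝ = ⟪Q x₀, h⟫_ℝ := (hQ.isSymmetric h x₀).trans (real_inner_comm _ _)
    simp only [hg, hQ'inner, map_add, inner_add_left, inner_add_right, add_zero,
      inner_zero_right] at this ⊢
    linarith
  set d : ℝ := ε / (1 + ‖Q'‖ + ε / 2) with hd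
  have hdpos : 0 < d := by positivity
  have hdε : (1 + ‖Q'‖ + ε / 2) * d = ε := by rw [hd]; field_simp
  obtain ⟨k, p, M, hkp, hM, hexp⟩ := exists_mem_tiltedMaxima_hasQuadraticExpansionAt hgconv hQ's
    (half_pos hε) hdpos hgmax
  have hQk : ‖Q' k‖ ≤ ‖Q'‖ * d := (Q'.le_opNorm k).trans (by gcongr; exact hkp.1)
  refine ⟨x₀ + k, Q x₀ + (Q' k + p), M, ⟨hM, ?_⟩, ?_, ?_, fun h => ⟨?_, ?_⟩⟩
  · refine hexp.congr_left fun h => ?_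
    simp only [hg, inner_add_left, inner_add_right, add_assoc]
    ring
  · rw [add_sub_cancel_left]
    nlinarith [hkp.1, norm_nonneg Q']
  · rw [add_sub_cancel_left]
    refine (norm_add_le _ _).trans ?_
    linarith [hkp.2.1]
  · exact hexp.inner_apply_self_nonneg
      (fun e => (TouchesAbove.of_mem_tiltedMaxima hkp).add_inner_le hgconv e) h
  · exact (hexp.inner_apply_self_le hkp.2.2 h).trans_eq (hQ'inner h)

/-- The Hessians found near the maximum point are bounded, so they accumulate. -/
lemma exists_mem_closure_expansionGraph (hf : ConvexOn ℝ univ f) (hQ : IsSelfAdjoint Q) {x₀ : H}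
    (hmax : ∀ x, f x - 1 / 2 * ⟪Q x, x⟫_ℝ ≤ f x₀ - 1 / 2 * ⟪Q x₀, x₀⟫_ℝ) :
    ∃ M, (x₀, Q x₀, M) ∈ closure (expansionGraph f) ∧
      ∀ h, 0 ≤ ⟪M h, h⟫_ℝ ∧ ⟪M h, h⟫_ℝ ≤ ⟪Q h, h⟫_ℝ := by
  have hε : ∀ k : ℕ, (0 : ℝ) < 1 / (k + 1) := fun k => by positivity
  choose x p M hmem hx hp hM using fun k : ℕ => exists_mem_expansionGraph_near_max hf hQ hmax (hε k)
  have hlim : Tendsto (fun k : ℕ => (1 : ℝ) / (k + 1)) atTop (𝓝 0) :=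
    tendsto_one_div_add_atTop_nhds_zero_nat
  have hMbdd : ∀ k, M k ∈ Metric.closedBall 0 (‖Q‖ + 1) := fun k => by
    rw [mem_closedBall_zero_iff]
    refine norm_le_of_isSelfAdjoint_of_abs_inner_le (hmem k).1 (by positivity) fun h => ?_
    rw [abs_of_nonneg (hM k h).1, add_mul]
    refine (hM k h).2.trans (add_le_add (abs_le.1 (abs_inner_apply_self_le Q h)).2 ?_)
    gcongr
    exact div_le_one_of_le₀ (by simp) (by positivity)
  obtain ⟨M₀, -, φ, hφ, hMlim⟩ := (isCompact_closedBall (0 : H →L[ℝ] H) _).tendsto_subseq hMbdd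
  have hxlim : Tendsto x atTop (𝓝 x₀) :=
    tendsto_iff_norm_sub_tendsto_zero.2 (squeeze_zero (fun _ => norm_nonneg _) hx hlim)
  have hplim : Tendsto p atTop (𝓝 (Q x₀)) :=
    tendsto_iff_norm_sub_tendsto_zero.2 (squeeze_zero (fun _ => norm_nonneg _) hp hlim)
  refine ⟨M₀, mem_closure_of_tendsto ((hxlim.comp hφ.tendsto_atTop).prodMk_nhds
    ((hplim.comp hφ.tendsto_atTop).prodMk_nhds hMlim)) (.of_forall fun k => hmem (φ k)),
    fun h => ?_⟩
  have hform : Tendsto (fun k => ⟪M (φ k) h, h⟫_ℝ) atTop (𝓝 ⟪M₀ h, h⟫_ℝ) :=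
    ((by fun_prop : Continuous fun N : H →L[ℝ] H => ⟪N h, h⟫_ℝ).tendsto M₀).comp hMlim
  have hupper : Tendsto (fun k => ⟪Q h, h⟫_ℝ + 1 / ((φ k : ℝ) + 1) * ‖h‖ ^ 2) atTop
      (𝓝 (⟪Q h, h⟫_ℝ + 0 * ‖h‖ ^ 2)) :=
    ((hlim.comp hφ.tendsto_atTop).mul_const _).const_add _
  rw [zero_mul, add_zero] at hupper
  exact ⟨ge_of_tendsto' hform fun k => (hM (φ k) h).1,
    le_of_tendsto_of_tendsto' hform hupper fun k => (hM (φ k) h).2⟩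

end LimitingExpansion

end SecondOrderLimits

section SupConvolution

open scoped Topology InnerProductSpace

lemma exists_isMaxOn_sub_of_tendsto_atTop {X : Type*} [TopologicalSpace X] {D : Set X}
    (hD : IsClosed D) (hne : D.Nonempty) {u k : X → ℝ} (hu : ContinuousOn u D)
    (hk : ContinuousOn k D) {C : ℝ} (hC : ∀ z ∈ D, u z ≤ C)
    (hlim : Tendsto k (cocompact X ⊓ 𝓟 D) atTop) :
    ∃ z ∈ D, IsMaxOn (fun z => u z - k z) D z := by
  obtain ⟨z₀, hz₀⟩ := hne
  refine (hu.sub hk).exists_isMaxOn' hD hz₀ ?_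
  filter_upwards [hlim.eventually_ge_atTop (C - (u z₀ - k z₀)),
    mem_inf_of_right (mem_principal_self D)] with z hkz hz
  have := hC z hz
  simp only [Pi.sub_apply]
  linarith

variable {E : Type*} [NormedAddCommGroup E] [InnerProductSpace ℝ E]

lemma convexOn_of_forall_add_inner_le {g : E → ℝ} {p : E → E}
    (h : ∀ z e, g z + ⟪p z, e⟫_ℝ ≤ g (z + e)) : ConvexOn ℝ univ g := by
  refine ⟨convex_univ, fun x _ y _ α β hα hβ hαβ => ?_⟩
  set z := α • x + β • y with hz
  have hx := mul_le_mul_of_nonneg_left (h z (x - z)) hα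
  have hy := mul_le_mul_of_nonneg_left (h z (y - z)) hβ
  have hzero : α * ⟪p z, x - z⟫_ℝ + β * ⟪p z, y - z⟫_ℝ = 0 := by
    rw [← real_inner_smul_right, ← real_inner_smul_right, ← inner_add_right, smul_sub, smul_sub,
      sub_add_sub_comm, ← hz, ← add_smul, hαβ, one_smul, sub_self, inner_zero_right]
  rw [add_sub_cancel] at hx hy
  have hg : α * g z + β * g z = g z := by rw [← add_mul, hαβ, one_mul]
  simp only [smul_eq_mul]
  linarith

/-- The function maximised over `y` in the sup-convolution of `u` with `b / 2 * ‖·‖ ^ 2`, written in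
Legendre form, that is, after adding `b / 2 * ‖z‖ ^ 2`; this makes it affine in `z`. -/
noncomputable def legendreIntegrand (u : E → ℝ) (b : ℝ) (y z : E) : ℝ :=
  u y - b / 2 * ‖y‖ ^ 2 + b * ⟪y, z⟫_ℝ

/-- `m z` is a point of `D` at which the sup-convolution of `u` over `D` is attained at `z`. -/
def IsLegendreMaximizer (u : E → ℝ) (D : Set E) (b : ℝ) (m : E → E) : Prop :=
  ∀ z, m z ∈ D ∧ ∀ y ∈ D, legendreIntegrand u b y z ≤ legendreIntegrand u b (m z) z

lemma legendreIntegrand_eq (u : E → ℝ) (b : ℝ) (y z : E) :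
    legendreIntegrand u b y z = u y - b / 2 * ‖y - z‖ ^ 2 + b / 2 * ‖z‖ ^ 2 := by
  rw [legendreIntegrand, norm_sub_sq_real]
  ring

lemma legendreIntegrand_add (u : E → ℝ) (b : ℝ) (y z e : E) :
    legendreIntegrand u b y (z + e) = legendreIntegrand u b y z + ⟪b • y, e⟫_ℝ := by
  rw [legendreIntegrand, legendreIntegrand, inner_add_right, real_inner_smul_left]
  ring

lemma exists_isLegendreMaximizer [ProperSpace E] {D : Set E} (hD : IsClosed D) (hne : D.Nonempty)
    {u : E → ℝ} (hu : ContinuousOn u D) {C : ℝ} (hC : ∀ z ∈ D, u z ≤ C) {b : ℝ} (hb : 0 < b) :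
    ∃ m, IsLegendreMaximizer u D b m := by
  have hmax : ∀ z, ∃ y ∈ D, IsMaxOn (fun y => u y - b / 2 * ‖y - z‖ ^ 2) D y := fun z => by
    refine exists_isMaxOn_sub_of_tendsto_atTop hD hne hu (by fun_prop) hC
      (.mono_left ?_ inf_le_left)
    have hsub : Tendsto (fun y : E => y - z) (cocompact E) (cocompact E) :=
      (Homeomorph.subRight z).isClosedEmbedding.tendsto_cocompact
    exact ((tendsto_pow_atTop two_ne_zero).comp
      (tendsto_norm_cocompact_atTop.comp hsub)).const_mul_atTop (half_pos hb)
  choose m hmD hm using hmax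
  refine ⟨m, fun z => ⟨hmD z, fun y hy => ?_⟩⟩
  rw [legendreIntegrand_eq, legendreIntegrand_eq]
  exact add_le_add_left (hm z hy) _

namespace IsLegendreMaximizer

variable {u : E → ℝ} {D : Set E} {b : ℝ} {m : E → E}

lemma add_inner_le (hm : IsLegendreMaximizer u D b m) (z e : E) :
    legendreIntegrand u b (m z) z + ⟪b • m z, e⟫_ℝ ≤
      legendreIntegrand u b (m (z + e)) (z + e) := by
  rw [← legendreIntegrand_add]
  exact (hm (z + e)).2 _ (hm z).1

lemma convexOn (hm : IsLegendreMaximizer u D b m) :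
    ConvexOn ℝ univ fun z => legendreIntegrand u b (m z) z :=
  convexOn_of_forall_add_inner_le hm.add_inner_le

lemma eq_smul_of_hasQuadraticExpansionAt (hm : IsLegendreMaximizer u D b m) {z p : E}
    {M : E →L[ℝ] E}
    (hexp : HasQuadraticExpansionAt (fun z => legendreIntegrand u b (m z) z) p M z) :
    p = b • m z :=
  hexp.eq_of_add_inner_le (hm.add_inner_le z)

end IsLegendreMaximizer

variable [CompleteSpace E]

/-- The second-order superjet of `u` at `z` relative to the set `D`. -/
def superjet (u : E → ℝ) (D : Set E) (z : E) : Set (E × (E →L[ℝ] E)) :=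
  {j | IsSelfAdjoint j.2 ∧ ∀ ε > 0, ∀ᶠ y in 𝓝[D] z,
    u y ≤ u z + ⟪j.1, y - z⟫_ℝ + 1 / 2 * ⟪j.2 (y - z), y - z⟫_ℝ + ε * ‖y - z‖ ^ 2}

/-- The graph of the superjet of `u` over `D`; its closure plays the role of the limiting
superjet. -/
def superjetGraph (u : E → ℝ) (D : Set E) : Set (E × E × (E →L[ℝ] E)) :=
  {q | q.1 ∈ D ∧ q.2 ∈ superjet u D q.1}

lemma isClosed_setOf_isSelfAdjoint : IsClosed {M : E →L[ℝ] E | IsSelfAdjoint M} :=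
  isClosed_eq (continuous_star (R := E →L[ℝ] E)) continuous_id

lemma isSelfAdjoint_of_mem_closure_superjetGraph {u : E → ℝ} {D : Set E} {z p : E} {X : E →L[ℝ] E}
    (h : (z, p, X) ∈ closure (superjetGraph u D)) : IsSelfAdjoint X := by
  have hclosed : IsClosed {q : E × E × (E →L[ℝ] E) | IsSelfAdjoint q.2.2} :=
    isClosed_setOf_isSelfAdjoint.preimage (f := fun q : E × E × (E →L[ℝ] E) => q.2.2)
      (continuous_snd.comp continuous_snd)
  have hsub : superjetGraph u D ⊆ {q : E × E × (E →L[ℝ] E) | IsSelfAdjoint q.2.2} := by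
    rintro q ⟨-, hq, -⟩
    exact hq
  simpa only [mem_ofPred_eq] using hclosed.closure_subset_iff.2 hsub h

/-- Comparing the sup-convolution at `z + h` with the competitor `m z + h` transports a second-order
expansion at `z` to a superjet of `u` at `m z`. -/
lemma IsLegendreMaximizer.mem_superjet {u : E → ℝ} {D : Set E} {b : ℝ} {m : E → E}
    (hm : IsLegendreMaximizer u D b m) {z p : E} {M : E →L[ℝ] E} (hM : IsSelfAdjoint M)
    (hexp : HasQuadraticExpansionAt (fun z => legendreIntegrand u b (m z) z) p M z) :
    (p - b • z, M - b • ContinuousLinearMap.id ℝ E) ∈ superjet u D (m z) := by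
  refine ⟨hM.sub (.smul (.all b) (.one _)), fun ε hε => ?_⟩
  have hlim : Tendsto (fun y => y - m z) (𝓝[D] (m z)) (𝓝 0) :=
    ((continuous_sub_right _).tendsto' _ _ (sub_self _)).mono_left nhdsWithin_le_nhds
  filter_upwards [hlim.eventually (hexp.def hε), self_mem_nhdsWithin] with y hy hyD
  obtain ⟨h, rfl⟩ : ∃ h, y = m z + h := ⟨y - m z, by abel⟩
  rw [add_sub_cancel_left, Real.norm_eq_abs, norm_pow, norm_norm] at hy
  replace hy := (abs_le.1 hy).2
  have hcomp := (hm (z + h)).2 _ hyD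
  rw [legendreIntegrand_eq, add_sub_add_right_eq_sub, norm_add_sq_real] at hcomp
  rw [legendreIntegrand_eq u b (m z) z] at hy
  simp only [add_sub_cancel_left, inner_sub_left, real_inner_smul_left, _root_.sub_apply,
    _root_.smul_apply, ContinuousLinearMap.id_apply, real_inner_self_eq_norm_sq]
  linarith

lemma IsLegendreMaximizer.mem_superjetGraph {u : E → ℝ} {D : Set E} {b : ℝ} {m : E → E}
    (hm : IsLegendreMaximizer u D b m) (hb : b ≠ 0) {z p : E} {M : E →L[ℝ] E}
    (hM : IsSelfAdjoint M)
    (hexp : HasQuadraticExpansionAt (fun z => legendreIntegrand u b (m z) z) p M z) :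
    (b⁻¹ • p, p - b • z, M - b • ContinuousLinearMap.id ℝ E) ∈ superjetGraph u D := by
  have hmz : b⁻¹ • p = m z := by
    rw [hm.eq_smul_of_hasQuadraticExpansionAt hexp, inv_smul_smul₀ hb]
  rw [hmz]
  exact ⟨(hm z).1, hm.mem_superjet hM hexp⟩

end SupConvolution

section TheoremOnSums

open scoped Topology InnerProductSpace
open ContinuousLinearMap

lemma norm_add_add_sq_le {E : Type*} [SeminormedAddCommGroup E] (x y z : E) :
    ‖x + y + z‖ ^ 2 ≤ 3 * (‖x‖ ^ 2 + ‖y‖ ^ 2 + ‖z‖ ^ 2) := by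
  have h : ‖x + y + z‖ ^ 2 ≤ (‖x‖ + ‖y‖ + ‖z‖) ^ 2 := by gcongr; exact norm_add₃_le
  nlinarith [sq_nonneg (‖x‖ - ‖y‖), sq_nonneg (‖x‖ - ‖z‖), sq_nonneg (‖y‖ - ‖z‖)]

section Blocks

variable {E : Type*} [NormedAddCommGroup E] [InnerProductSpace ℝ E] [CompleteSpace E]
  {F : Type*} [NormedAddCommGroup F] [InnerProductSpace ℝ F] [CompleteSpace F]

@[simp]
lemma adjoint_fstL_apply (h : E) : adjoint (WithLp.fstL 2 ℝ E F) h = WithLp.toLp 2 (h, 0) :=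
  ext_inner_right ℝ fun ξ => by simp [adjoint_inner_left, WithLp.prod_inner_apply]

@[simp]
lemma adjoint_sndL_apply (h : F) : adjoint (WithLp.sndL 2 ℝ E F) h = WithLp.toLp 2 (0, h) :=
  ext_inner_right ℝ fun ξ => by simp [adjoint_inner_left, WithLp.prod_inner_apply]

/-- The upper left block of an operator on `E × F`. -/
noncomputable def fstBlock (M : WithLp 2 (E × F) →L[ℝ] WithLp 2 (E × F)) : E →L[ℝ] E :=
  WithLp.fstL 2 ℝ E F ∘L M ∘L adjoint (WithLp.fstL 2 ℝ E F)

/-- The lower right block of an operator on `E × F`. -/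
noncomputable def sndBlock (M : WithLp 2 (E × F) →L[ℝ] WithLp 2 (E × F)) : F →L[ℝ] F :=
  WithLp.sndL 2 ℝ E F ∘L M ∘L adjoint (WithLp.sndL 2 ℝ E F)

lemma inner_sndBlock_apply_self (M : WithLp 2 (E × F) →L[ℝ] WithLp 2 (E × F)) (k : F) :
    ⟪sndBlock M k, k⟫_ℝ = ⟪M (WithLp.toLp 2 (0, k)), WithLp.toLp 2 (0, k)⟫_ℝ := by
  simp [sndBlock, WithLp.prod_inner_apply]

lemma continuous_fstBlock : Continuous (fstBlock (E := E) (F := F)) := by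
  unfold fstBlock
  fun_prop

lemma continuous_sndBlock : Continuous (sndBlock (E := E) (F := F)) := by
  unfold sndBlock
  fun_prop

namespace HasQuadraticExpansionAt

variable {g₁ : E → ℝ} {g₂ : F → ℝ} {p x : WithLp 2 (E × F)}
  {M : WithLp 2 (E × F) →L[ℝ] WithLp 2 (E × F)}

lemma fstBlock (h : HasQuadraticExpansionAt
    (fun ξ : WithLp 2 (E × F) => g₁ ξ.fst + g₂ ξ.snd) p M x) :
    HasQuadraticExpansionAt g₁ p.fst (fstBlock M) x.fst := by
  have := h.comp_isometry (g := g₁) (y := x.fst) (A := adjoint (WithLp.fstL 2 ℝ E F))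
    (fun k => by simp) (fun k => by simp)
  rwa [adjoint_adjoint] at this

lemma sndBlock (h : HasQuadraticExpansionAt
    (fun ξ : WithLp 2 (E × F) => g₁ ξ.fst + g₂ ξ.snd) p M x) :
    HasQuadraticExpansionAt g₂ p.snd (sndBlock M) x.snd := by
  have := h.comp_isometry (g := g₂) (y := x.snd) (A := adjoint (WithLp.sndL 2 ℝ E F))
    (fun k => by simp) (fun k => by simp)
  rwa [adjoint_adjoint] at this

lemma inner_apply_self_eq_add (h : HasQuadraticExpansionAt
    (fun ξ : WithLp 2 (E × F) => g₁ ξ.fst + g₂ ξ.snd) p M x) (ζ : WithLp 2 (E × F)) :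
    ⟪M ζ, ζ⟫_ℝ = ⟪_root_.fstBlock M ζ.fst, ζ.fst⟫_ℝ + ⟪_root_.sndBlock M ζ.snd, ζ.snd⟫_ℝ := by
  have hadd := (h.fstBlock.tendsto_div_sq ζ.fst).add (h.sndBlock.tendsto_div_sq ζ.snd)
  have heq := tendsto_nhds_unique (h.tendsto_div_sq ζ) (hadd.congr fun s => ?_)
  · linarith
  · have hp : ⟪p, ζ⟫_ℝ = ⟪p.fst, ζ.fst⟫_ℝ + ⟪p.snd, ζ.snd⟫_ℝ := WithLp.prod_inner_apply p ζ
    simp only [WithLp.add_fst, WithLp.add_snd, WithLp.smul_fst, WithLp.smul_snd, hp]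
    ring

end HasQuadraticExpansionAt

/-- The form `b * (‖z‖ ^ 2 + ‖w‖ ^ 2 + ‖z - w‖ ^ 2)` on `E × E`. -/
noncomputable def doublingForm (E : Type*) [NormedAddCommGroup E] [InnerProductSpace ℝ E]
    [CompleteSpace E] (b : ℝ) : WithLp 2 (E × E) →L[ℝ] WithLp 2 (E × E) :=
  b • (ContinuousLinearMap.id ℝ _ + adjoint (WithLp.fstL 2 ℝ E E - WithLp.sndL 2 ℝ E E) ∘L
    (WithLp.fstL 2 ℝ E E - WithLp.sndL 2 ℝ E E))

lemma inner_doublingForm (b : ℝ) (ξ ζ : WithLp 2 (E × E)) :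
    ⟪doublingForm E b ξ, ζ⟫_ℝ =
      b * (⟪ξ.fst, ζ.fst⟫_ℝ + ⟪ξ.snd, ζ.snd⟫_ℝ + ⟪ξ.fst - ξ.snd, ζ.fst - ζ.snd⟫_ℝ) := by
  simp only [doublingForm, _root_.smul_apply, _root_.add_apply, ContinuousLinearMap.id_apply,
    ContinuousLinearMap.comp_apply, real_inner_smul_left, inner_add_left, adjoint_inner_left,
    _root_.sub_apply, WithLp.fstL_apply, WithLp.sndL_apply]
  rw [WithLp.prod_inner_apply]
  rfl

lemma isSelfAdjoint_doublingForm (b : ℝ) : IsSelfAdjoint (doublingForm E b) :=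
  isSelfAdjoint_iff_isSymmetric.2 fun ξ ζ => by
    rw [coe_coe, real_inner_comm (doublingForm E b ζ) ξ, inner_doublingForm, inner_doublingForm,
      real_inner_comm ζ.fst, real_inner_comm ζ.snd, real_inner_comm (ζ.fst - ζ.snd)]

variable {u₁ u₂ : E → ℝ} {D : Set E} {b : ℝ} {m₁ m₂ : E → E}

/-- The sum of the two sup-convolutions stays below the doubled maximum because
`a / 2 * ‖x + y + z‖ ^ 2 ≤ 3 * a / 2 * (‖x‖ ^ 2 + ‖y‖ ^ 2 + ‖z‖ ^ 2)`, with equality for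
`x = y = z`; this dictates both `3 * a` and the point dividing the segment in thirds. -/
lemma legendreIntegrand_add_sub_doublingForm_le (hm₁ : IsLegendreMaximizer u₁ D b m₁)
    (hm₂ : IsLegendreMaximizer u₂ D b m₂) {a : ℝ} (ha : 0 < a) (hb : b = 3 * a) {zh wh : E}
    (hz : zh ∈ D) (hw : wh ∈ D)
    (hmax : ∀ z ∈ D, ∀ w ∈ D, u₁ z + u₂ w - a / 2 * ‖z - w‖ ^ 2 ≤
      u₁ zh + u₂ wh - a / 2 * ‖zh - wh‖ ^ 2) {ξ₀ : WithLp 2 (E × E)}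
    (hfst : ξ₀.fst = zh - (1 / 3 : ℝ) • (zh - wh)) (hsnd : ξ₀.snd = wh + (1 / 3 : ℝ) • (zh - wh))
    (ξ : WithLp 2 (E × E)) :
    legendreIntegrand u₁ b (m₁ ξ.fst) ξ.fst + legendreIntegrand u₂ b (m₂ ξ.snd) ξ.snd
        - 1 / 2 * ⟪doublingForm E b ξ, ξ⟫_ℝ ≤
      legendreIntegrand u₁ b (m₁ ξ₀.fst) ξ₀.fst + legendreIntegrand u₂ b (m₂ ξ₀.snd) ξ₀.snd
        - 1 / 2 * ⟪doublingForm E b ξ₀, ξ₀⟫_ℝ := by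
  have hlow₁ := (hm₁ ξ₀.fst).2 zh hz
  have hlow₂ := (hm₂ ξ₀.snd).2 wh hw
  have hup := hmax _ (hm₁ ξ.fst).1 _ (hm₂ ξ.snd).1
  have hthree := norm_add_add_sq_le (m₁ ξ.fst - ξ.fst) (ξ.fst - ξ.snd) (ξ.snd - m₂ ξ.snd)
  rw [sub_add_sub_cancel, sub_add_sub_cancel, norm_sub_rev ξ.snd] at hthree
  have hthird : ‖(1 / 3 : ℝ) • (zh - wh)‖ ^ 2 = 1 / 9 * ‖zh - wh‖ ^ 2 := by
    rw [norm_smul, mul_pow]; norm_num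
  have hdiff : ξ₀.fst - ξ₀.snd = (1 / 3 : ℝ) • (zh - wh) := by rw [hfst, hsnd]; module
  rw [legendreIntegrand_eq u₁ b zh] at hlow₁
  rw [legendreIntegrand_eq u₂ b wh] at hlow₂
  rw [show zh - ξ₀.fst = (1 / 3 : ℝ) • (zh - wh) by rw [hfst]; abel, hthird] at hlow₁
  rw [show wh - ξ₀.snd = -((1 / 3 : ℝ) • (zh - wh)) by rw [hsnd]; abel, norm_neg, hthird] at hlow₂
  rw [inner_doublingForm, inner_doublingForm, hdiff, legendreIntegrand_eq u₁ b (m₁ ξ.fst),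
    legendreIntegrand_eq u₂ b (m₂ ξ.snd)]
  simp only [real_inner_self_eq_norm_sq, hthird]
  nlinarith

lemma IsLegendreMaximizer.fstBlock_mem_closure_superjetGraph (hm : IsLegendreMaximizer u₁ D b m₁)
    (hb : b ≠ 0) {g : F → ℝ} {ξ p : WithLp 2 (E × F)} {M : WithLp 2 (E × F) →L[ℝ] WithLp 2 (E × F)}
    (hmem : (ξ, p, M) ∈ closure (expansionGraph fun ξ : WithLp 2 (E × F) =>
      legendreIntegrand u₁ b (m₁ ξ.fst) ξ.fst + g ξ.snd)) :
    (b⁻¹ • p.fst, p.fst - b • ξ.fst, fstBlock M - b • ContinuousLinearMap.id ℝ E) ∈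
      closure (superjetGraph u₁ D) := by
  refine map_mem_closure (f := fun q : WithLp 2 (E × F) × WithLp 2 (E × F) × _ =>
    (b⁻¹ • q.2.1.fst, q.2.1.fst - b • q.1.fst, fstBlock q.2.2 - b • ContinuousLinearMap.id ℝ E))
    ?_ hmem ?_
  · have := continuous_fstBlock (E := E) (F := F)
    have : Continuous fun ξ : WithLp 2 (E × F) => ξ.fst := (WithLp.fstL 2 ℝ E F).continuous
    fun_prop
  · exact fun q hq => hm.mem_superjetGraph hb (hq.1.conj_adjoint _) hq.2.fstBlock

lemma IsLegendreMaximizer.sndBlock_mem_closure_superjetGraph (hm : IsLegendreMaximizer u₂ D b m₂)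
    (hb : b ≠ 0) {g : F → ℝ} {ξ p : WithLp 2 (F × E)} {M : WithLp 2 (F × E) →L[ℝ] WithLp 2 (F × E)}
    (hmem : (ξ, p, M) ∈ closure (expansionGraph fun ξ : WithLp 2 (F × E) =>
      g ξ.fst + legendreIntegrand u₂ b (m₂ ξ.snd) ξ.snd)) :
    (b⁻¹ • p.snd, p.snd - b • ξ.snd, sndBlock M - b • ContinuousLinearMap.id ℝ E) ∈
      closure (superjetGraph u₂ D) := by
  refine map_mem_closure (f := fun q : WithLp 2 (F × E) × WithLp 2 (F × E) × _ =>
    (b⁻¹ • q.2.1.snd, q.2.1.snd - b • q.1.snd, sndBlock q.2.2 - b • ContinuousLinearMap.id ℝ E))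
    ?_ hmem ?_
  · have := continuous_sndBlock (E := F) (F := E)
    have : Continuous fun ξ : WithLp 2 (F × E) => ξ.snd := (WithLp.sndL 2 ℝ F E).continuous
    fun_prop
  · exact fun q hq => hm.mem_superjetGraph hb (hq.1.conj_adjoint _) hq.2.sndBlock

lemma inner_apply_self_eq_add_of_mem_closure_expansionGraph {g₁ : E → ℝ} {g₂ : F → ℝ}
    {ξ p : WithLp 2 (E × F)} {M : WithLp 2 (E × F) →L[ℝ] WithLp 2 (E × F)}
    (hmem : (ξ, p, M) ∈ closure (expansionGraph fun ξ : WithLp 2 (E × F) =>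
      g₁ ξ.fst + g₂ ξ.snd)) (ζ : WithLp 2 (E × F)) :
    ⟪M ζ, ζ⟫_ℝ = ⟪fstBlock M ζ.fst, ζ.fst⟫_ℝ + ⟪sndBlock M ζ.snd, ζ.snd⟫_ℝ := by
  have hcont₁ := continuous_fstBlock (E := E) (F := F)
  have hcont₂ := continuous_sndBlock (E := E) (F := F)
  have hclosed : IsClosed {N : WithLp 2 (E × F) →L[ℝ] WithLp 2 (E × F) | ⟪N ζ, ζ⟫_ℝ =
      ⟪fstBlock N ζ.fst, ζ.fst⟫_ℝ + ⟪sndBlock N ζ.snd, ζ.snd⟫_ℝ} :=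
    isClosed_eq (by fun_prop) (by fun_prop)
  exact closure_minimal (fun q hq => hq.2.inner_apply_self_eq_add ζ)
    (hclosed.preimage (continuous_snd.comp continuous_snd)) hmem

end Blocks

section DoublingPair

variable {E : Type*} [NormedAddCommGroup E] [InnerProductSpace ℝ E] [CompleteSpace E]
  {a : ℝ} {X Y : E →L[ℝ] E}

/-- Pairs of Hessians, the second with the sign of a subsolution, which may occur at a maximum of
`u₁ z + u₂ w - a / 2 * ‖z - w‖ ^ 2`. -/
def IsDoublingPair (a : ℝ) (X Y : E →L[ℝ] E) : Prop :=
  IsSelfAdjoint X ∧ IsSelfAdjoint Y ∧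
    ∀ h k, -(3 * a) * (‖h‖ ^ 2 + ‖k‖ ^ 2) ≤ ⟪X h, h⟫_ℝ + ⟪Y k, k⟫_ℝ ∧
      ⟪X h, h⟫_ℝ + ⟪Y k, k⟫_ℝ ≤ 3 * a * ‖h - k‖ ^ 2

namespace IsDoublingPair

lemma symm (h : IsDoublingPair a X Y) : IsDoublingPair a Y X :=
  ⟨h.2.1, h.1, fun k l => by
    rw [add_comm ⟪Y k, k⟫_ℝ, add_comm (‖k‖ ^ 2), norm_sub_rev]
    exact h.2.2 l k⟩

lemma norm_fst_le (h : IsDoublingPair a X Y) (ha : 0 ≤ a) : ‖X‖ ≤ 3 * a :=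
  norm_le_of_isSelfAdjoint_of_abs_inner_le h.1 (by positivity) fun k => by
    have hk := h.2.2 k 0
    simp only [map_zero, inner_zero_left, norm_zero, sub_zero, add_zero] at hk
    exact abs_le.2 ⟨by linarith [hk.1], by linarith [hk.2]⟩

lemma sndBlock {F : Type*} [NormedAddCommGroup F] [InnerProductSpace ℝ F] [CompleteSpace F]
    {M N : WithLp 2 (E × F) →L[ℝ] WithLp 2 (E × F)} (h : IsDoublingPair a M N) :
    IsDoublingPair a (sndBlock M) (sndBlock N) := by
  refine ⟨h.1.conj_adjoint _, h.2.1.conj_adjoint _, fun k l => ?_⟩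
  have hkl := h.2.2 (WithLp.toLp 2 (0, k)) (WithLp.toLp 2 (0, l))
  simpa [← WithLp.toLp_sub, inner_sndBlock_apply_self] using hkl

end IsDoublingPair

lemma isClosed_setOf_isDoublingPair (a : ℝ) :
    IsClosed {q : (E →L[ℝ] E) × (E →L[ℝ] E) | IsDoublingPair a q.1 q.2} := by
  simp only [IsDoublingPair, ofPred_and, ofPred_forall]
  refine (isClosed_setOf_isSelfAdjoint.preimage continuous_fst).inter
    ((isClosed_setOf_isSelfAdjoint.preimage continuous_snd).inter
    (isClosed_iInter fun h => isClosed_iInter fun k => .inter ?_ ?_))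
  · exact isClosed_le continuous_const (by fun_prop)
  · exact isClosed_le (by fun_prop) continuous_const

lemma isCompact_setOf_isDoublingPair [FiniteDimensional ℝ E] (ha : 0 ≤ a) :
    IsCompact {q : (E →L[ℝ] E) × (E →L[ℝ] E) | IsDoublingPair a q.1 q.2} := by
  have : ProperSpace (E →L[ℝ] E) := FiniteDimensional.proper ℝ _
  refine Metric.isCompact_of_isClosed_isBounded (isClosed_setOf_isDoublingPair a)
    ((Metric.isBounded_closedBall (x := 0) (r := 3 * a)).subset fun q hq => ?_)
  rw [mem_closedBall_zero_iff, Prod.norm_def]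
  exact max_le (hq.norm_fst_le ha) (hq.symm.norm_fst_le ha)

end DoublingPair

section FiniteDimensional

variable {E : Type*} [NormedAddCommGroup E] [InnerProductSpace ℝ E] [FiniteDimensional ℝ E]
  {D : Set E} {u₁ u₂ : E → ℝ} {a : ℝ} {zh wh : E}

lemma exists_mem_closure_expansionGraph_of_isMax {b : ℝ} {m₁ m₂ : E → E}
    (hm₁ : IsLegendreMaximizer u₁ D b m₁) (hm₂ : IsLegendreMaximizer u₂ D b m₂) (ha : 0 < a)
    (hb : b = 3 * a) (hz : zh ∈ D) (hw : wh ∈ D)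
    (hmax : ∀ z ∈ D, ∀ w ∈ D, u₁ z + u₂ w - a / 2 * ‖z - w‖ ^ 2 ≤
      u₁ zh + u₂ wh - a / 2 * ‖zh - wh‖ ^ 2) {ξ₀ : WithLp 2 (E × E)}
    (hfst : ξ₀.fst = zh - (1 / 3 : ℝ) • (zh - wh)) (hsnd : ξ₀.snd = wh + (1 / 3 : ℝ) • (zh - wh)) :
    ∃ M, (ξ₀, WithLp.toLp 2 (b • zh, b • wh), M) ∈
        closure (expansionGraph fun ξ : WithLp 2 (E × E) =>
          legendreIntegrand u₁ b (m₁ ξ.fst) ξ.fst + legendreIntegrand u₂ b (m₂ ξ.snd) ξ.snd) ∧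
      ∀ ζ, 0 ≤ ⟪M ζ, ζ⟫_ℝ ∧ ⟪M ζ, ζ⟫_ℝ ≤ ⟪doublingForm E b ζ, ζ⟫_ℝ := by
  have hconv : ConvexOn ℝ univ fun ξ : WithLp 2 (E × E) =>
      legendreIntegrand u₁ b (m₁ ξ.fst) ξ.fst + legendreIntegrand u₂ b (m₂ ξ.snd) ξ.snd :=
    (hm₁.convexOn.comp_linearMap (WithLp.fstL 2 ℝ E E).toLinearMap).add
      (hm₂.convexOn.comp_linearMap (WithLp.sndL 2 ℝ E E).toLinearMap)
  have hgrad : doublingForm E b ξ₀ = WithLp.toLp 2 (b • zh, b • wh) :=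
    ext_inner_right ℝ fun ζ => by
      rw [inner_doublingForm, WithLp.prod_inner_apply, hfst, hsnd]
      change _ = ⟪b • zh, ζ.fst⟫_ℝ + ⟪b • wh, ζ.snd⟫_ℝ
      simp only [inner_add_left, inner_sub_left, inner_sub_right, real_inner_smul_left]
      ring
  rw [← hgrad]
  exact exists_mem_closure_expansionGraph hconv (isSelfAdjoint_doublingForm b)
    (legendreIntegrand_add_sub_doublingForm_le hm₁ hm₂ ha hb hz hw hmax hfst hsnd)

/-- Crandall and Ishii's theorem on sums for the penalisation `a / 2 * ‖z - w‖ ^ 2`. -/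
theorem exists_mem_closure_superjetGraph_of_isMax (hD : IsClosed D)
    (hu₁ : ContinuousOn u₁ D) (hu₂ : ContinuousOn u₂ D) {C₁ C₂ : ℝ} (hC₁ : ∀ z ∈ D, u₁ z ≤ C₁)
    (hC₂ : ∀ z ∈ D, u₂ z ≤ C₂) (ha : 0 < a) (hz : zh ∈ D) (hw : wh ∈ D)
    (hmax : ∀ z ∈ D, ∀ w ∈ D, u₁ z + u₂ w - a / 2 * ‖z - w‖ ^ 2 ≤
      u₁ zh + u₂ wh - a / 2 * ‖zh - wh‖ ^ 2) :
    ∃ X Y : E →L[ℝ] E, (zh, a • (zh - wh), X) ∈ closure (superjetGraph u₁ D) ∧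
      (wh, -(a • (zh - wh)), Y) ∈ closure (superjetGraph u₂ D) ∧
      IsDoublingPair a X Y := by
  obtain ⟨b, hb⟩ : ∃ b, b = 3 * a := ⟨_, rfl⟩
  have hbpos : 0 < b := by linarith
  obtain ⟨m₁, hm₁⟩ := exists_isLegendreMaximizer hD ⟨zh, hz⟩ hu₁ hC₁ hbpos
  obtain ⟨m₂, hm₂⟩ := exists_isLegendreMaximizer hD ⟨zh, hz⟩ hu₂ hC₂ hbpos
  obtain ⟨M, hMmem, hM⟩ := exists_mem_closure_expansionGraph_of_isMax hm₁ hm₂ ha hb hz hw hmax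
    (ξ₀ := WithLp.toLp 2 (zh - (1 / 3 : ℝ) • (zh - wh), wh + (1 / 3 : ℝ) • (zh - wh))) rfl rfl
  have hX := hm₁.fstBlock_mem_closure_superjetGraph hbpos.ne'
    (g := fun w => legendreIntegrand u₂ b (m₂ w) w) hMmem
  have hY := hm₂.sndBlock_mem_closure_superjetGraph hbpos.ne'
    (g := fun z => legendreIntegrand u₁ b (m₁ z) z) hMmem
  have hgrad₁ : b • zh - b • (zh - (1 / 3 : ℝ) • (zh - wh)) = a • (zh - wh) := by rw [hb]; module
  have hgrad₂ : b • wh - b • (wh + (1 / 3 : ℝ) • (zh - wh)) = -(a • (zh - wh)) := by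
    rw [hb]; module
  simp only [WithLp.toLp_fst, inv_smul_smul₀ hbpos.ne', hgrad₁] at hX
  simp only [WithLp.toLp_snd, inv_smul_smul₀ hbpos.ne', hgrad₂] at hY
  refine ⟨_, _, hX, hY, isSelfAdjoint_of_mem_closure_superjetGraph hX,
    isSelfAdjoint_of_mem_closure_superjetGraph hY, fun h k => ?_⟩
  have hblocks := inner_apply_self_eq_add_of_mem_closure_expansionGraph
    (g₁ := fun z => legendreIntegrand u₁ b (m₁ z) z)
    (g₂ := fun w => legendreIntegrand u₂ b (m₂ w) w) hMmem (WithLp.toLp 2 (h, k))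
  have hbounds := hM (WithLp.toLp 2 (h, k))
  rw [hblocks, inner_doublingForm, hb] at hbounds
  simp only [real_inner_self_eq_norm_sq, WithLp.toLp_fst, WithLp.toLp_snd] at hbounds
  simp only [_root_.sub_apply, _root_.smul_apply, ContinuousLinearMap.id_apply, inner_sub_left,
    real_inner_smul_left, real_inner_self_eq_norm_sq, hb]
  constructor <;> linarith [hbounds.1, hbounds.2]

end FiniteDimensional

end TheoremOnSums

section Equation

open scoped Topology InnerProductSpace

/-- The matrix of an operator on `ℝⁿ` in the standard basis. -/
noncomputable abbrev operatorMatrix (X : EuclideanSpace ℝ (Fin n) →L[ℝ] EuclideanSpace ℝ (Fin n)) :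
    Matrix (Fin n) (Fin n) ℝ :=
  (toEuclideanCLM (𝕜 := ℝ)).symm X

lemma dotProduct_operatorMatrix_mulVec
    (X : EuclideanSpace ℝ (Fin n) →L[ℝ] EuclideanSpace ℝ (Fin n)) (ξ η : Fin n → ℝ) :
    ξ ⬝ᵥ operatorMatrix X *ᵥ η = ⟪X (WithLp.toLp 2 η), WithLp.toLp 2 ξ⟫_ℝ := by
  have h := inner_toEuclideanCLM (operatorMatrix X) (WithLp.toLp 2 ξ) (WithLp.toLp 2 η)
  rwa [StarAlgEquiv.apply_symm_apply, real_inner_comm, eq_comm] at h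

lemma operatorMatrix_apply (X : EuclideanSpace ℝ (Fin n) →L[ℝ] EuclideanSpace ℝ (Fin n))
    (i j : Fin n) :
    operatorMatrix X i j = ⟪X (EuclideanSpace.single j 1), EuclideanSpace.single i 1⟫_ℝ := by
  simpa using dotProduct_operatorMatrix_mulVec X (Pi.single i 1) (Pi.single j 1)

lemma continuous_operatorMatrix :
    Continuous (operatorMatrix : (EuclideanSpace ℝ (Fin n) →L[ℝ] EuclideanSpace ℝ (Fin n)) → _) :=
  continuous_matrix fun i j => by
    simp only [operatorMatrix_apply]
    fun_prop

lemma abs_operatorMatrix_apply_le (X : EuclideanSpace ℝ (Fin n) →L[ℝ] EuclideanSpace ℝ (Fin n))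
    (i j : Fin n) : |operatorMatrix X i j| ≤ ‖X‖ := by
  rw [operatorMatrix_apply]
  refine (abs_real_inner_le_norm _ _).trans ?_
  simpa using X.le_opNorm (EuclideanSpace.single j 1)

/-- The nonlinearities `F t x r p X` of second-order parabolic equations on `ℝⁿ`. -/
abbrev Nonlinearity (n : ℕ) : Type :=
  ℝ → EuclideanSpace ℝ (Fin n) → ℝ → EuclideanSpace ℝ (Fin n) → Matrix (Fin n) (Fin n) ℝ → ℝ

/-- Viscosity subsolutions of `∂ₜu - F = 0` on `(0, T) × ℝⁿ`. -/
def IsSubsolution (T : ℝ) (F : Nonlinearity n) (u : ℝ × EuclideanSpace ℝ (Fin n) → ℝ) : Prop :=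
  ∀ ψ : ℝ × EuclideanSpace ℝ (Fin n) → ℝ, ContDiff ℝ 2 ψ → ∀ t₀ ∈ Ioo 0 T, ∀ x₀,
    IsLocalMaxOn (fun q => u q - ψ q) (Ioo 0 T ×ˢ univ) (t₀, x₀) →
    ptDeriv ψ (t₀, x₀) - F t₀ x₀ (u (t₀, x₀)) (pxGrad ψ (t₀, x₀)) (pxHess ψ (t₀, x₀)) ≤ 0

/-- Joint continuity of a nonlinearity. -/
def IsContinuousNonlinearity (F : Nonlinearity n) : Prop :=
  Continuous fun q : ℝ × EuclideanSpace ℝ (Fin n) × ℝ × EuclideanSpace ℝ (Fin n) ×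
    Matrix (Fin n) (Fin n) ℝ => F q.1 q.2.1 q.2.2.1 q.2.2.2.1 q.2.2.2.2

lemma IsContinuousNonlinearity.tendsto {F : Nonlinearity n} (hF : IsContinuousNonlinearity F)
    {ι : Type*} {l : Filter ι} {t : ι → ℝ} {x p : ι → EuclideanSpace ℝ (Fin n)} {r : ι → ℝ}
    {X : ι → EuclideanSpace ℝ (Fin n) →L[ℝ] EuclideanSpace ℝ (Fin n)} {t₀ r₀ : ℝ}
    {x₀ p₀ : EuclideanSpace ℝ (Fin n)}
    {X₀ : EuclideanSpace ℝ (Fin n) →L[ℝ] EuclideanSpace ℝ (Fin n)}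
    (ht : Tendsto t l (𝓝 t₀)) (hx : Tendsto x l (𝓝 x₀)) (hr : Tendsto r l (𝓝 r₀))
    (hp : Tendsto p l (𝓝 p₀)) (hX : Tendsto X l (𝓝 X₀)) :
    Tendsto (fun i => F (t i) (x i) (r i) (p i) (operatorMatrix (X i))) l
      (𝓝 (F t₀ x₀ r₀ p₀ (operatorMatrix X₀))) :=
  (Continuous.tendsto hF (t₀, x₀, r₀, p₀, operatorMatrix X₀)).comp (ht.prodMk_nhds (hx.prodMk_nhds
    (hr.prodMk_nhds (hp.prodMk_nhds ((continuous_operatorMatrix.tendsto X₀).comp hX)))))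

/-- The sum of a function of time and a quadratic polynomial centred at `x₀`. -/
noncomputable def quadraticTest (f : ℝ → ℝ) (p : EuclideanSpace ℝ (Fin n))
    (X : EuclideanSpace ℝ (Fin n) →L[ℝ] EuclideanSpace ℝ (Fin n)) (x₀ : EuclideanSpace ℝ (Fin n))
    (q : ℝ × EuclideanSpace ℝ (Fin n)) : ℝ :=
  f q.1 + ⟪p, q.2 - x₀⟫_ℝ + 1 / 2 * ⟪X (q.2 - x₀), q.2 - x₀⟫_ℝ

section QuadraticTest

variable {f : ℝ → ℝ} {p x₀ : EuclideanSpace ℝ (Fin n)}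
  {X : EuclideanSpace ℝ (Fin n) →L[ℝ] EuclideanSpace ℝ (Fin n)}

lemma contDiff_quadraticTest (hf : ContDiff ℝ 2 f) : ContDiff ℝ 2 (quadraticTest f p X x₀) := by
  have hsub : ContDiff ℝ 2 fun q : ℝ × EuclideanSpace ℝ (Fin n) => q.2 - x₀ := by fun_prop
  have hX := X.contDiff.comp hsub
  exact ((hf.comp contDiff_fst).add (contDiff_const.inner ℝ hsub)).add
    (contDiff_const.mul (hX.inner ℝ hsub))

lemma fderiv_quadraticTest_apply (hf : Differentiable ℝ f) (hX : IsSelfAdjoint X)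
    (q v : ℝ × EuclideanSpace ℝ (Fin n)) :
    fderiv ℝ (quadraticTest f p X x₀) q v = v.1 * deriv f q.1 + ⟪p + X (q.2 - x₀), v.2⟫_ℝ := by
  have hsub : HasFDerivAt (fun q : ℝ × EuclideanSpace ℝ (Fin n) => q.2 - x₀)
      (ContinuousLinearMap.snd ℝ ℝ _) q := hasFDerivAt_snd.sub_const x₀
  have htime : HasFDerivAt (fun q : ℝ × EuclideanSpace ℝ (Fin n) => f q.1)
      (deriv f q.1 • ContinuousLinearMap.fst ℝ ℝ _) q :=
    (hf q.1).hasDerivAt.comp_hasFDerivAt q hasFDerivAt_fst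
  have hlin := (hasFDerivAt_const p q).inner ℝ hsub
  have hquad := ((X.hasFDerivAt.comp q hsub).inner ℝ hsub).const_mul (1 / 2)
  have hsum : HasFDerivAt (quadraticTest f p X x₀) _ q := (htime.add hlin).add hquad
  have hsymm : ⟪X v.2, q.2 - x₀⟫_ℝ = ⟪X (q.2 - x₀), v.2⟫_ℝ :=
    (hX.isSymmetric v.2 (q.2 - x₀)).trans (real_inner_comm _ _)
  rw [hsum.fderiv]
  simp [hsymm, inner_add_left]
  ring

lemma ptDeriv_quadraticTest (hf : Differentiable ℝ f) (hX : IsSelfAdjoint X)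
    (q : ℝ × EuclideanSpace ℝ (Fin n)) : ptDeriv (quadraticTest f p X x₀) q = deriv f q.1 := by
  simp [ptDeriv, fderiv_quadraticTest_apply hf hX]

lemma pxGrad_quadraticTest (hf : Differentiable ℝ f) (hX : IsSelfAdjoint X)
    (q : ℝ × EuclideanSpace ℝ (Fin n)) :
    pxGrad (quadraticTest f p X x₀) q = p + X (q.2 - x₀) := by
  ext i
  simp [pxGrad, fderiv_quadraticTest_apply hf hX, EuclideanSpace.inner_single_right]

lemma pxHess_quadraticTest (hf : Differentiable ℝ f) (hX : IsSelfAdjoint X)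
    (q : ℝ × EuclideanSpace ℝ (Fin n)) :
    pxHess (quadraticTest f p X x₀) q = operatorMatrix X := by
  ext i j
  have hsub : HasFDerivAt (fun q : ℝ × EuclideanSpace ℝ (Fin n) => p + X (q.2 - x₀))
      (X ∘L ContinuousLinearMap.snd ℝ ℝ _) q :=
    (X.hasFDerivAt.comp q (hasFDerivAt_snd.sub_const x₀)).const_add p
  have hinner := hsub.inner ℝ (hasFDerivAt_const (EuclideanSpace.single j (1 : ℝ)) q)
  simp only [pxHess, fderiv_quadraticTest_apply hf hX, zero_mul, zero_add]
  rw [hinner.fderiv, operatorMatrix_apply]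
  simpa using (hX.isSymmetric (EuclideanSpace.single i 1) (EuclideanSpace.single j 1)).trans
    (real_inner_comm _ _)

lemma IsSubsolution.deriv_le_of_isLocalMax {T : ℝ} {F : Nonlinearity n}
    {u : ℝ × EuclideanSpace ℝ (Fin n) → ℝ} (hu : IsSubsolution T F u) (hf : ContDiff ℝ 2 f)
    (hX : IsSelfAdjoint X) {t : ℝ} (ht : t ∈ Ioo 0 T) {x : EuclideanSpace ℝ (Fin n)}
    (hmax : IsLocalMax (fun q => u q - quadraticTest f p X x₀ q) (t, x)) :
    deriv f t ≤ F t x (u (t, x)) (p + X (x - x₀)) (operatorMatrix X) := by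
  have hf' : Differentiable ℝ f := hf.differentiable two_ne_zero
  have h := hu _ (contDiff_quadraticTest hf) t ht x (hmax.on _)
  rwa [ptDeriv_quadraticTest hf' hX, pxGrad_quadraticTest hf' hX, pxHess_quadraticTest hf' hX,
    sub_nonpos] at h

end QuadraticTest

end Equation

section ParabolicSuperjet

open scoped Topology InnerProductSpace

lemma exists_contDiff_monotone_step {s t g : ℝ} (hst : s < t) (hg : 0 ≤ g) :
    ∃ f : ℝ → ℝ, ContDiff ℝ 2 f ∧ Monotone f ∧ (∀ τ, 0 ≤ f τ) ∧ f s = 0 ∧ f t = g := by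
  refine ⟨fun τ => g * Real.smoothTransition ((τ - s) / (t - s)),
    contDiff_const.mul (Real.smoothTransition.contDiff.comp (by fun_prop)), fun τ τ' hττ' => ?_,
    fun τ => mul_nonneg hg (Real.smoothTransition.nonneg _), by simp,
    by simp [div_self (sub_pos.2 hst).ne']⟩
  refine mul_le_mul_of_nonneg_left (Real.smoothTransition.monotone ?_) hg
  gcongr

/-- The barrier `f` vanishes up to a time shortly before `t₀` and then rises smoothly by more than
`w` can gain, which pushes the maximum of `w` back before `t₀`. -/
lemma exists_monotone_isLocalMax_sub {V : Type*} [SeminormedAddCommGroup V] [ProperSpace V]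
    {w : ℝ × V → ℝ} {t₀ r κ : ℝ} {x₀ : V} (hr : 0 < r) (hκ : 0 < κ)
    (hw : ContinuousOn w (Icc (t₀ - r) t₀ ×ˢ Metric.closedBall x₀ r))
    (hstrict : ∀ q ∈ Icc (t₀ - r) t₀ ×ˢ Metric.closedBall x₀ r,
      w q ≤ w (t₀, x₀) - κ * ((q.1 - t₀) ^ 2 + ‖q.2 - x₀‖ ^ 2)) :
    ∃ f : ℝ → ℝ, ContDiff ℝ 2 f ∧ Monotone f ∧ ∃ q ∈ Ioo (t₀ - r) t₀ ×ˢ Metric.ball x₀ r,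
      IsLocalMax (fun q => w q - f q.1) q := by
  have hgap : 0 < κ * r ^ 2 := by positivity
  have hslice : ContinuousWithinAt (fun s => w (s, x₀)) (Icc (t₀ - r) t₀) t₀ :=
    (hw (t₀, x₀) ⟨⟨by linarith, le_rfl⟩, Metric.mem_closedBall_self hr.le⟩).comp
      (f := fun s : ℝ => (s, x₀)) (by fun_prop) fun s hs => ⟨hs, Metric.mem_closedBall_self hr.le⟩
  obtain ⟨s, hsw, hsr, hst⟩ : ∃ s, w (t₀, x₀) - κ * r ^ 2 < w (s, x₀) ∧ t₀ - r ≤ s ∧ s < t₀ := by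
    have hIco : Ico (t₀ - r) t₀ ∈ 𝓝[<] t₀ := Ico_mem_nhdsLT (by linarith)
    have hev := (hslice.mono Ico_subset_Icc_self).eventually_const_lt (sub_lt_self _ hgap)
    rw [nhdsWithin_Ico_eq_nhdsLT (by linarith)] at hev
    obtain ⟨s, hs, hs'⟩ := (hev.and hIco).exists
    exact ⟨s, hs, hs'⟩
  obtain ⟨f, hfcont, hfmono, hfnonneg, hfs, hft₀⟩ := exists_contDiff_monotone_step hst hgap.le
  have hsQ : (s, x₀) ∈ Icc (t₀ - r) t₀ ×ˢ Metric.closedBall x₀ r :=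
    ⟨⟨hsr, hst.le⟩, Metric.mem_closedBall_self hr.le⟩
  obtain ⟨⟨t, x⟩, hq, hmax⟩ := (isCompact_Icc.prod (isCompact_closedBall x₀ r)).exists_isMaxOn
    ⟨_, hsQ⟩ (hw.sub (hfcont.continuous.comp continuous_fst).continuousOn)
  have hlower : w (t₀, x₀) - κ * r ^ 2 < w (t, x) - f t :=
    hsw.trans_le (by simpa [hfs] using hmax hsQ)
  have hupper : w (t, x) ≤ w (t₀, x₀) - κ * ((t - t₀) ^ 2 + ‖x - x₀‖ ^ 2) := hstrict _ hq
  have hftnonneg := hfnonneg t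
  have hsq : (t - t₀) ^ 2 + ‖x - x₀‖ ^ 2 < r ^ 2 := by
    have : κ * ((t - t₀) ^ 2 + ‖x - x₀‖ ^ 2) < κ * r ^ 2 := by linarith
    exact lt_of_mul_lt_mul_left this hκ.le
  have htr : t₀ - r < t := by
    linarith [(abs_lt_of_sq_lt_sq' (by nlinarith : (t - t₀) ^ 2 < r ^ 2) hr.le).1]
  have htt₀ : t < t₀ := hq.1.2.lt_of_ne fun h : t = t₀ => by
    rw [h, hft₀] at hlower
    have : w (t₀, x) ≤ w (t₀, x₀) := by
      rw [h] at hupper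
      exact hupper.trans (sub_le_self _ (by positivity))
    linarith
  have hxr : x ∈ Metric.ball x₀ r := by
    rw [mem_ball_iff_norm]
    exact lt_of_pow_lt_pow_left₀ 2 hr.le (by nlinarith)
  refine ⟨f, hfcont, hfmono, (t, x), ⟨⟨htr, htt₀⟩, hxr⟩, ?_⟩
  exact hmax.isLocalMax (prod_mem_nhds (Icc_mem_nhds htr htt₀)
    (Metric.closedBall_mem_nhds_of_mem hxr))

/-- The parabolic second-order superjet of `u` at `z` relative to `[0, T] × ℝⁿ`. The equation does
not see `∂ₜ²u`, so an error `C * (t - t₀) ^ 2` is allowed. -/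
def parabolicSuperjet (T : ℝ) (u : ℝ × EuclideanSpace ℝ (Fin n) → ℝ)
    (z : ℝ × EuclideanSpace ℝ (Fin n)) : Set (ℝ × EuclideanSpace ℝ (Fin n) ×
      (EuclideanSpace ℝ (Fin n) →L[ℝ] EuclideanSpace ℝ (Fin n))) :=
  {j | IsSelfAdjoint j.2.2 ∧ ∀ κ > 0, ∃ C, ∀ᶠ q in 𝓝[Icc 0 T ×ˢ univ] z,
    u q ≤ u z + j.1 * (q.1 - z.1) + C * (q.1 - z.1) ^ 2 + ⟪j.2.1, q.2 - z.2⟫_ℝ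
      + 1 / 2 * ⟪j.2.2 (q.2 - z.2), q.2 - z.2⟫_ℝ + κ * ‖q.2 - z.2‖ ^ 2}

lemma exists_cylinder_subset {V : Type*} [SeminormedAddCommGroup V] {T t₀ : ℝ} {x₀ : V}
    (ht₀ : t₀ ∈ Ioc 0 T) {S : Set (ℝ × V)} (hS : S ∈ 𝓝[Icc 0 T ×ˢ univ] (t₀, x₀)) :
    ∃ r > 0, r < t₀ ∧ Icc (t₀ - r) t₀ ×ˢ Metric.closedBall x₀ r ⊆ Icc 0 T ×ˢ univ ∩ S := by
  obtain ⟨ε, hε, hball⟩ := (Metric.nhds_basis_closedBall.inf_principal _).mem_iff.1 hS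
  have hrε : min ε (t₀ / 2) ≤ ε := min_le_left _ _
  have hrt : min ε (t₀ / 2) ≤ t₀ / 2 := min_le_right _ _
  refine ⟨min ε (t₀ / 2), lt_min hε (half_pos ht₀.1), by linarith [ht₀.1], fun q hq => ?_⟩
  have hqT : q ∈ Icc 0 T ×ˢ (univ : Set V) :=
    ⟨⟨by linarith [hq.1.1, ht₀.1], hq.1.2.trans ht₀.2⟩, trivial⟩
  refine ⟨hqT, hball ⟨?_, hqT⟩⟩
  rw [← closedBall_prod_same, Real.closedBall_eq_Icc]
  exact ⟨⟨by linarith [hq.1.1], by linarith [hq.1.2]⟩,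
    Metric.closedBall_subset_closedBall hrε hq.2⟩

namespace IsSubsolution

variable {T : ℝ} {F : Nonlinearity n} {u : ℝ × EuclideanSpace ℝ (Fin n) → ℝ} {t₀ : ℝ}
  {x₀ p : EuclideanSpace ℝ (Fin n)} {X : EuclideanSpace ℝ (Fin n) →L[ℝ] EuclideanSpace ℝ (Fin n)}
  {τ : ℝ}

lemma le_of_eventually_le (hu : IsSubsolution T F u) (hF : IsContinuousNonlinearity F)
    (hucont : ContinuousOn u (Icc 0 T ×ˢ univ)) (ht₀ : t₀ ∈ Ioc 0 T) (hX : IsSelfAdjoint X)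
    {C κ : ℝ} (hκ : 0 < κ) (hle : ∀ᶠ q in 𝓝[Icc 0 T ×ˢ univ] (t₀, x₀),
      u q ≤ u (t₀, x₀) + τ * (q.1 - t₀) + C * (q.1 - t₀) ^ 2 + ⟪p, q.2 - x₀⟫_ℝ
        + 1 / 2 * ⟪X (q.2 - x₀), q.2 - x₀⟫_ℝ + κ * ‖q.2 - x₀‖ ^ 2) :
    τ ≤ F t₀ x₀ (u (t₀, x₀)) p
      (operatorMatrix (X + (4 * κ) • ContinuousLinearMap.id ℝ (EuclideanSpace ℝ (Fin n)))) := by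
  by_contra! hlt
  set X' := X + (4 * κ) • ContinuousLinearMap.id ℝ (EuclideanSpace ℝ (Fin n)) with hX'
  have hX's : IsSelfAdjoint X' := isSelfAdjoint_add_smul_id hX _
  have hz₀ : (t₀, x₀) ∈ Icc 0 T ×ˢ (univ : Set (EuclideanSpace ℝ (Fin n))) :=
    ⟨Ioc_subset_Icc_self ht₀, trivial⟩
  have hgrad : ContinuousWithinAt (fun q : ℝ × EuclideanSpace ℝ (Fin n) => p + X' (q.2 - x₀))
      (Icc 0 T ×ˢ univ) (t₀, x₀) := by fun_prop
  have hcontF := hF.tendsto (l := 𝓝[Icc 0 T ×ˢ univ] (t₀, x₀)) continuousWithinAt_fst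
    continuousWithinAt_snd (hucont _ hz₀) hgrad (tendsto_const_nhds (x := X'))
  set f₀ : ℝ → ℝ := fun t => τ * (t - t₀) + (C + κ) * (t - t₀) ^ 2 with hf₀
  have hf₀c : ContDiff ℝ 2 f₀ := by fun_prop
  have hf₀' : ∀ t, HasDerivAt f₀ (τ + 2 * (C + κ) * (t - t₀)) t := fun t => by
    have h := (hasDerivAt_id t).sub_const t₀
    exact ((h.const_mul τ).add ((h.pow 2).const_mul (C + κ))).congr_deriv (by simp; ring)
  have hev : ∀ᶠ q in 𝓝[Icc 0 T ×ˢ univ] (t₀, x₀),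
      F q.1 q.2 (u q) (p + X' (q.2 - x₀)) (operatorMatrix X') <
        τ + 2 * (C + κ) * (q.1 - t₀) :=
    Tendsto.eventually_lt hcontF (Continuous.continuousWithinAt (by fun_prop)) (by simpa using hlt)
  obtain ⟨r, hr, hrt₀, hcyl⟩ := exists_cylinder_subset ht₀ (hev.and hle)
  obtain ⟨f, hf, hfmono, ⟨t, x⟩, hq, hmax⟩ := exists_monotone_isLocalMax_sub
    (w := fun q => u q - quadraticTest f₀ p X' x₀ q) hr hκ
    ((hucont.mono fun q hq => (hcyl hq).1).sub
      (contDiff_quadraticTest hf₀c).continuous.continuousOn) fun q hq => by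
        have hqle := (hcyl hq).2.2
        have hz : quadraticTest f₀ p X' x₀ (t₀, x₀) = 0 := by simp [quadraticTest, hf₀]
        rw [hz]
        simp only [quadraticTest, hf₀, hX', inner_add_smul_id_apply_self]
        linarith
  have hqQ := hcyl ⟨Ioo_subset_Icc_self hq.1, Metric.ball_subset_closedBall hq.2⟩
  have hsub := hu.deriv_le_of_isLocalMax (f := f₀ + f) (p := p) (x₀ := x₀) (hf₀c.add hf) hX's
    (t := t) (x := x) ⟨by linarith [hq.1.1], hq.1.2.trans_le ht₀.2⟩
    (hmax.congr (.of_forall fun q => by simp [quadraticTest]; ring))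
  rw [((hf₀' t).add (hf.differentiable two_ne_zero t).hasDerivAt).deriv] at hsub
  linarith [hfmono.deriv_nonneg (x := t), hqQ.2.1]

lemma le_of_mem_parabolicSuperjet (hu : IsSubsolution T F u) (hF : IsContinuousNonlinearity F)
    (hucont : ContinuousOn u (Icc 0 T ×ˢ univ)) (ht₀ : t₀ ∈ Ioc 0 T)
    (hjet : (τ, p, X) ∈ parabolicSuperjet T u (t₀, x₀)) :
    τ ≤ F t₀ x₀ (u (t₀, x₀)) p (operatorMatrix X) := by
  have hX : Tendsto (fun κ : ℝ => X + (4 * κ) •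
      ContinuousLinearMap.id ℝ (EuclideanSpace ℝ (Fin n))) (𝓝[>] 0) (𝓝 X) :=
    tendsto_nhdsWithin_of_tendsto_nhds (Continuous.tendsto' (by fun_prop) _ _ (by ext; simp))
  refine ge_of_tendsto (hF.tendsto tendsto_const_nhds tendsto_const_nhds tendsto_const_nhds
    tendsto_const_nhds hX) (eventually_mem_nhdsWithin.mono fun κ hκ => ?_)
  obtain ⟨C, hC⟩ := hjet.2 κ hκ
  exact hu.le_of_eventually_le hF hucont ht₀ hjet.1 hκ hC

end IsSubsolution

end ParabolicSuperjet

section RescaledJets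

open scoped Topology InnerProductSpace

/-- Young's inequality absorbs the mixed terms into the first block. -/
lemma inner_apply_self_le_sndBlock {E F : Type*} [NormedAddCommGroup E] [InnerProductSpace ℝ E]
    [CompleteSpace E] [NormedAddCommGroup F] [InnerProductSpace ℝ F] [CompleteSpace F]
    (M : WithLp 2 (E × F) →L[ℝ] WithLp 2 (E × F)) {κ : ℝ} (hκ : 0 < κ) (h : E) (k : F) :
    ⟪M (WithLp.toLp 2 (h, k)), WithLp.toLp 2 (h, k)⟫_ℝ ≤
      (‖M‖ + ‖M‖ ^ 2 / κ) * ‖h‖ ^ 2 + ⟪sndBlock M k, k⟫_ℝ + κ * ‖k‖ ^ 2 := by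
  have hbound : ∀ a b : WithLp 2 (E × F), ⟪M a, b⟫_ℝ ≤ ‖M‖ * ‖a‖ * ‖b‖ := fun a b =>
    (real_inner_le_norm _ _).trans (by gcongr; exact M.le_opNorm a)
  have hsplit : WithLp.toLp 2 (h, k) = WithLp.toLp 2 (h, 0) + WithLp.toLp 2 (0, k) := by
    simp [← WithLp.toLp_add]
  have hhh := hbound (WithLp.toLp 2 (h, 0)) (WithLp.toLp 2 (h, 0))
  have hhk := hbound (WithLp.toLp 2 (h, 0)) (WithLp.toLp 2 (0, k))
  have hkh := hbound (WithLp.toLp 2 (0, k)) (WithLp.toLp 2 (h, 0))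
  simp only [WithLp.norm_toLp_fst, WithLp.norm_toLp_snd] at hhh hhk hkh
  have hyoung : 2 * (‖M‖ * ‖h‖ * ‖k‖) ≤ ‖M‖ ^ 2 / κ * ‖h‖ ^ 2 + κ * ‖k‖ ^ 2 := by
    have hsq : 0 ≤ (‖M‖ * ‖h‖ - κ * ‖k‖) ^ 2 / κ := by positivity
    have hexpand : (‖M‖ * ‖h‖ - κ * ‖k‖) ^ 2 / κ =
        ‖M‖ ^ 2 / κ * ‖h‖ ^ 2 + κ * ‖k‖ ^ 2 - 2 * (‖M‖ * ‖h‖ * ‖k‖) := by field_simp; ring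
    linarith
  rw [hsplit, map_add, inner_add_left, inner_add_right, inner_add_right, inner_sndBlock_apply_self]
  linarith

/-- `u` in the rescaled time `t / c`, penalised by `η * t + ε * ‖x‖ ^ 2`. For small `c` the
Euclidean penalty `a / 2 * ‖z - w‖ ^ 2` in the rescaled variables forces two times together. -/
noncomputable def rescaledPenalized (u : ℝ × EuclideanSpace ℝ (Fin n) → ℝ) (c η ε : ℝ)
    (z : WithLp 2 (ℝ × EuclideanSpace ℝ (Fin n))) : ℝ :=
  u (c * z.fst, z.snd) - η * (c * z.fst) - ε * ‖z.snd‖ ^ 2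

/-- The slab `[0, T] × ℝⁿ` in the rescaled time `t / c`. -/
def rescaledSlab (n : ℕ) (T c : ℝ) : Set (WithLp 2 (ℝ × EuclideanSpace ℝ (Fin n))) :=
  {z | c * z.fst ∈ Icc 0 T}

variable {T c η ε : ℝ} {u : ℝ × EuclideanSpace ℝ (Fin n) → ℝ}
  {z p : WithLp 2 (ℝ × EuclideanSpace ℝ (Fin n))}
  {X : WithLp 2 (ℝ × EuclideanSpace ℝ (Fin n)) →L[ℝ] WithLp 2 (ℝ × EuclideanSpace ℝ (Fin n))}

lemma continuous_rescale (c : ℝ) : Continuous fun z : WithLp 2 (ℝ × EuclideanSpace ℝ (Fin n)) =>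
    (c * z.fst, z.snd) :=
  ((WithLp.fstL 2 ℝ ℝ (EuclideanSpace ℝ (Fin n))).continuous.const_mul c).prodMk
    (WithLp.sndL 2 ℝ ℝ (EuclideanSpace ℝ (Fin n))).continuous

lemma isClosed_rescaledSlab (n : ℕ) (T c : ℝ) : IsClosed (rescaledSlab n T c) :=
  isClosed_Icc.preimage (continuous_fst.comp (continuous_rescale c))

lemma mapsTo_rescale : MapsTo (fun z : WithLp 2 (ℝ × EuclideanSpace ℝ (Fin n)) =>
    (c * z.fst, z.snd)) (rescaledSlab n T c) (Icc 0 T ×ˢ univ) :=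
  fun _ hz => ⟨hz, trivial⟩

lemma continuousOn_rescaledPenalized (hu : ContinuousOn u (Icc 0 T ×ˢ univ)) :
    ContinuousOn (rescaledPenalized u c η ε) (rescaledSlab n T c) := by
  have hcont := continuous_rescale (n := n) c
  refine ((hu.comp hcont.continuousOn mapsTo_rescale).sub ?_).sub ?_
  · exact ((continuous_fst.comp hcont).const_mul η).continuousOn
  · exact (((continuous_snd.comp hcont).norm.pow 2).const_mul ε).continuousOn

lemma tendsto_unscale_rescaledSlab (hc : 0 < c) :
    Tendsto (fun q : ℝ × EuclideanSpace ℝ (Fin n) => WithLp.toLp 2 (q.1 / c, q.2))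
      (𝓝[Icc 0 T ×ˢ univ] (c * z.fst, z.snd)) (𝓝[rescaledSlab n T c] z) := by
  refine tendsto_nhdsWithin_iff.2 ⟨tendsto_nhdsWithin_of_tendsto_nhds
    (Continuous.tendsto' (by fun_prop) _ _ ?_), eventually_mem_nhdsWithin.mono fun q hq => ?_⟩
  · rw [mul_div_cancel_left₀ _ hc.ne']
    rfl
  · simpa [rescaledSlab, mul_div_cancel₀ _ hc.ne'] using hq.1

lemma mem_parabolicSuperjet_of_mem_superjet (hc : 0 < c)
    (h : (p, X) ∈ superjet (rescaledPenalized u c η ε) (rescaledSlab n T c) z) :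
    (η + p.fst / c, p.snd + (2 * ε) • z.snd,
      sndBlock X + (2 * ε) • ContinuousLinearMap.id ℝ (EuclideanSpace ℝ (Fin n))) ∈
        parabolicSuperjet T u (c * z.fst, z.snd) := by
  refine ⟨isSelfAdjoint_add_smul_id (h.1.conj_adjoint _) _, fun κ hκ =>
    ⟨((‖X‖ + ‖X‖ ^ 2 / κ) / 2 + κ / 2) / c ^ 2, ?_⟩⟩
  filter_upwards [(tendsto_unscale_rescaledSlab hc).eventually (h.2 (κ / 2) (half_pos hκ))]
    with q hq
  obtain ⟨s, k, rfl⟩ : ∃ s k, q = (c * (z.fst + s), z.snd + k) :=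
    ⟨q.1 / c - z.fst, q.2 - z.snd,
      Prod.ext (by rw [add_sub_cancel, mul_div_cancel₀ _ hc.ne']) (add_sub_cancel _ _).symm⟩
  have hdiff : WithLp.toLp 2 (z.fst + s, z.snd + k) - z = WithLp.toLp 2 (s, k) :=
    congrArg (WithLp.toLp 2) (Prod.ext (add_sub_cancel_left _ _) (add_sub_cancel_left _ _))
  have hblock := inner_apply_self_le_sndBlock X hκ s k
  have htime : ((‖X‖ + ‖X‖ ^ 2 / κ) / 2 + κ / 2) / c ^ 2 * (c * s) ^ 2 =
      ((‖X‖ + ‖X‖ ^ 2 / κ) / 2 + κ / 2) * s ^ 2 := by field_simp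
  have hdrift : p.fst / c * (c * s) = p.fst * s := by field_simp
  rw [mul_div_cancel_left₀ _ hc.ne', hdiff, WithLp.prod_norm_sq_eq_of_L2, WithLp.prod_inner_apply,
    Real.inner_apply] at hq
  simp only [rescaledPenalized, WithLp.fst, WithLp.snd, Real.norm_eq_abs, sq_abs, mul_add,
    norm_add_sq_real] at hq hblock hdrift ⊢
  rw [inner_add_left, real_inner_smul_left]
  simp only [add_sub_cancel_left, inner_add_smul_id_apply_self, add_mul, mul_add, hdrift, htime]
  linarith

/-- The equation is closed, so it holds for limits of jets. -/
lemma IsSubsolution.le_of_mem_closure_superjetGraph {F : Nonlinearity n}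
    (hu : IsSubsolution T F u) (hF : IsContinuousNonlinearity F)
    (hucont : ContinuousOn u (Icc 0 T ×ˢ univ)) (hc : 0 < c) (hz : 0 < c * z.fst)
    (h : (z, p, X) ∈ closure (superjetGraph (rescaledPenalized u c η ε) (rescaledSlab n T c))) :
    η + p.fst / c ≤ F (c * z.fst) z.snd (u (c * z.fst, z.snd)) (p.snd + (2 * ε) • z.snd)
      (operatorMatrix (sndBlock X +
        (2 * ε) • ContinuousLinearMap.id ℝ (EuclideanSpace ℝ (Fin n)))) := by
  obtain ⟨q, hqS, hq⟩ := mem_closure_iff_seq_limit.1 h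
  have hz₀ : Tendsto (fun i => (q i).1) atTop (𝓝 z) := hq.fst_nhds
  have hp₀ : Tendsto (fun i => (q i).2.1) atTop (𝓝 p) := hq.snd_nhds.fst_nhds
  have hX₀ : Tendsto (fun i => (q i).2.2) atTop (𝓝 X) := hq.snd_nhds.snd_nhds
  have hzD : z ∈ rescaledSlab n T c :=
    (isClosed_rescaledSlab n T c).mem_of_tendsto hz₀ (.of_forall fun i => (hqS i).1)
  have hscaled : Tendsto (fun i => (c * (q i).1.fst, (q i).1.snd)) atTop (𝓝 (c * z.fst, z.snd)) :=
    ((continuous_rescale c).tendsto z).comp hz₀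
  have hut : Tendsto (fun i => u (c * (q i).1.fst, (q i).1.snd)) atTop (𝓝 (u (c * z.fst, z.snd))) :=
    (hucont (c * z.fst, z.snd) ⟨hzD, trivial⟩).tendsto.comp
      (tendsto_nhdsWithin_iff.2 ⟨hscaled, .of_forall fun i => ⟨(hqS i).1, trivial⟩⟩)
  have hlhs : Tendsto (fun i => η + (q i).2.1.fst / c) atTop (𝓝 (η + p.fst / c)) :=
    ((((WithLp.fstL 2 ℝ ℝ (EuclideanSpace ℝ (Fin n))).continuous.tendsto p).comp hp₀).div_const
      c).const_add η
  refine le_of_tendsto_of_tendsto hlhs (hF.tendsto hscaled.fst_nhds hscaled.snd_nhds hut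
    ((((WithLp.sndL 2 ℝ ℝ (EuclideanSpace ℝ (Fin n))).continuous.tendsto p).comp hp₀).add
      (hscaled.snd_nhds.const_smul (2 * ε)))
    (((continuous_sndBlock.tendsto X).comp hX₀).add_const _)) ?_
  filter_upwards [hscaled.fst_nhds.eventually (lt_mem_nhds hz)] with i hi
  exact hu.le_of_mem_parabolicSuperjet hF hucont ⟨hi, (hqS i).1.2⟩
    (mem_parabolicSuperjet_of_mem_superjet hc (hqS i).2)

end RescaledJets

section Doubling

open scoped Topology

/-- The functional maximised when the space variables are doubled, with the time variables still
separate. -/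
noncomputable def doublingFunctional (u₁ u₂ : ℝ × EuclideanSpace ℝ (Fin n) → ℝ) (η ε a : ℝ)
    (z w : ℝ × EuclideanSpace ℝ (Fin n)) : ℝ :=
  u₁ z + u₂ w - η * (z.1 + w.1) - ε * (‖z.2‖ ^ 2 + ‖w.2‖ ^ 2) - a / 2 * ‖z.2 - w.2‖ ^ 2

/-- The sum of the right-hand sides of the equations for `u₁` at `z` and `u₂` at `w`, evaluated on
the jets produced by a maximum of `doublingFunctional u₁ u₂ η ε a`. -/
noncomputable def doubledNonlinearity (F₁ F₂ : Nonlinearity n)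
    (u₁ u₂ : ℝ × EuclideanSpace ℝ (Fin n) → ℝ) (ε a : ℝ) (z w : ℝ × EuclideanSpace ℝ (Fin n))
    (X Y : EuclideanSpace ℝ (Fin n) →L[ℝ] EuclideanSpace ℝ (Fin n)) : ℝ :=
  F₁ z.1 z.2 (u₁ z) (a • (z.2 - w.2) + (2 * ε) • z.2)
      (operatorMatrix (X + (2 * ε) • ContinuousLinearMap.id ℝ _)) +
    F₂ w.1 w.2 (u₂ w) (-(a • (z.2 - w.2)) + (2 * ε) • w.2)
      (operatorMatrix (Y + (2 * ε) • ContinuousLinearMap.id ℝ _))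

variable {T : ℝ} {F₁ F₂ : Nonlinearity n} {u₁ u₂ : ℝ × EuclideanSpace ℝ (Fin n) → ℝ}
  {C₁ C₂ η ε a c : ℝ}

lemma rescaledPenalized_le (hε : 0 ≤ ε) (hC₁ : ∀ z ∈ Icc 0 T ×ˢ univ, u₁ z ≤ C₁)
    {z : WithLp 2 (ℝ × EuclideanSpace ℝ (Fin n))} (hz : z ∈ rescaledSlab n T c) :
    rescaledPenalized u₁ c η ε z ≤ C₁ + |η| * T := by
  have htime : -(|η| * T) ≤ η * (c * z.fst) := by
    refine neg_le_of_abs_le ?_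
    rw [abs_mul, abs_of_nonneg hz.1]
    exact mul_le_mul_of_nonneg_left hz.2 (abs_nonneg η)
  have hspace : 0 ≤ ε * ‖z.snd‖ ^ 2 := by positivity
  rw [rescaledPenalized]
  linarith [hC₁ (c * z.fst, z.snd) ⟨hz, trivial⟩]

lemma rescaledPenalized_add_sub_eq (z w : WithLp 2 (ℝ × EuclideanSpace ℝ (Fin n))) :
    rescaledPenalized u₁ c η ε z + rescaledPenalized u₂ c η ε w - a / 2 * ‖z - w‖ ^ 2 =
      doublingFunctional u₁ u₂ η ε a (c * z.fst, z.snd) (c * w.fst, w.snd)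
        - a / 2 * (z.fst - w.fst) ^ 2 := by
  rw [WithLp.prod_norm_sq_eq_of_L2, WithLp.sub_fst, WithLp.sub_snd, Real.norm_eq_abs, sq_abs,
    rescaledPenalized, rescaledPenalized, doublingFunctional]
  ring

lemma norm_sq_le_of_mem_rescaledSlab (hc : 0 < c)
    {z : WithLp 2 (ℝ × EuclideanSpace ℝ (Fin n))} (hz : z ∈ rescaledSlab n T c) :
    ‖z‖ ^ 2 ≤ (T / c) ^ 2 + ‖z.snd‖ ^ 2 := by
  have hfst : |z.fst| ≤ T / c := by
    rw [le_div_iff₀' hc, ← abs_of_pos hc, ← abs_mul, abs_of_nonneg hz.1]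
    exact hz.2
  rw [WithLp.prod_norm_sq_eq_of_L2, Real.norm_eq_abs]
  gcongr

lemma tendsto_doublingPenalty_atTop (hε : 0 < ε) (ha : 0 ≤ a) (hc : 0 < c) :
    Tendsto (fun q : WithLp 2 (ℝ × EuclideanSpace ℝ (Fin n)) ×
        WithLp 2 (ℝ × EuclideanSpace ℝ (Fin n)) =>
          ε * (‖q.1.snd‖ ^ 2 + ‖q.2.snd‖ ^ 2) + a / 2 * ‖q.1 - q.2‖ ^ 2)
      (cocompact _ ⊓ 𝓟 (rescaledSlab n T c ×ˢ rescaledSlab n T c)) atTop := by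
  have hnorm := ((tendsto_pow_atTop two_ne_zero).comp (tendsto_norm_cocompact_atTop
    (E := WithLp 2 (ℝ × EuclideanSpace ℝ (Fin n)) ×
      WithLp 2 (ℝ × EuclideanSpace ℝ (Fin n))))).const_mul_atTop hε
  refine tendsto_atTop_mono' _ ?_ ((tendsto_atTop_add_const_right _ (-(2 * ε * (T / c) ^ 2))
    hnorm).mono_left inf_le_left)
  filter_upwards [mem_inf_of_right (mem_principal_self _)] with q hq
  have hmax : ‖q‖ ^ 2 ≤ ‖q.1‖ ^ 2 + ‖q.2‖ ^ 2 := by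
    rcases max_choice ‖q.1‖ ‖q.2‖ with h | h <;> rw [Prod.norm_def, h] <;>
      linarith [sq_nonneg ‖q.1‖, sq_nonneg ‖q.2‖]
  have hq₁ := norm_sq_le_of_mem_rescaledSlab hc hq.1
  have hq₂ := norm_sq_le_of_mem_rescaledSlab hc hq.2
  have hpen : 0 ≤ a / 2 * ‖q.1 - q.2‖ ^ 2 := by positivity
  have := mul_le_mul_of_nonneg_left (hmax.trans (add_le_add hq₁ hq₂)) hε.le
  simp only [Function.comp_apply]
  linarith

lemma exists_max_rescaledPenalized (hT : 0 ≤ T) (hucont₁ : ContinuousOn u₁ (Icc 0 T ×ˢ univ))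
    (hucont₂ : ContinuousOn u₂ (Icc 0 T ×ˢ univ)) (hC₁ : ∀ z ∈ Icc 0 T ×ˢ univ, u₁ z ≤ C₁)
    (hC₂ : ∀ z ∈ Icc 0 T ×ˢ univ, u₂ z ≤ C₂) (hε : 0 < ε) (ha : 0 ≤ a) (hc : 0 < c) :
    ∃ z ∈ rescaledSlab n T c, ∃ w ∈ rescaledSlab n T c,
      ∀ z' ∈ rescaledSlab n T c, ∀ w' ∈ rescaledSlab n T c,
        rescaledPenalized u₁ c η ε z' + rescaledPenalized u₂ c η ε w' - a / 2 * ‖z' - w'‖ ^ 2 ≤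
          rescaledPenalized u₁ c η ε z + rescaledPenalized u₂ c η ε w - a / 2 * ‖z - w‖ ^ 2 := by
  have hzero : (0 : WithLp 2 (ℝ × EuclideanSpace ℝ (Fin n))) ∈ rescaledSlab n T c := by
    simpa [rescaledSlab] using hT
  obtain ⟨q, hq, hmax⟩ := exists_isMaxOn_sub_of_tendsto_atTop
    (u := fun q => rescaledPenalized u₁ c η 0 q.1 + rescaledPenalized u₂ c η 0 q.2)
    ((isClosed_rescaledSlab n T c).prod (isClosed_rescaledSlab n T c)) ⟨(0, 0), hzero, hzero⟩
    (((continuousOn_rescaledPenalized hucont₁).comp continuousOn_fst fun q hq => hq.1).add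
      ((continuousOn_rescaledPenalized hucont₂).comp continuousOn_snd fun q hq => hq.2))
    (Continuous.continuousOn (by fun_prop)) (fun q hq => add_le_add
      (rescaledPenalized_le le_rfl hC₁ hq.1) (rescaledPenalized_le le_rfl hC₂ hq.2))
    (tendsto_doublingPenalty_atTop hε ha hc)
  refine ⟨q.1, hq.1, q.2, hq.2, fun z hz w hw => ?_⟩
  have hle := hmax (show (z, w) ∈ rescaledSlab n T c ×ˢ rescaledSlab n T c from ⟨hz, hw⟩)
  simp only [rescaledPenalized, mem_ofPred_eq] at hle ⊢
  linarith

/-- In the rescaled variables the two time components of the jets are opposite, so they cancel when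
the equations are added. -/
lemma exists_rescaled_doubling (hT : 0 ≤ T) (hu₁ : IsSubsolution T F₁ u₁)
    (hu₂ : IsSubsolution T F₂ u₂) (hF₁ : IsContinuousNonlinearity F₁)
    (hF₂ : IsContinuousNonlinearity F₂) (hucont₁ : ContinuousOn u₁ (Icc 0 T ×ˢ univ))
    (hucont₂ : ContinuousOn u₂ (Icc 0 T ×ˢ univ)) (hC₁ : ∀ z ∈ Icc 0 T ×ˢ univ, u₁ z ≤ C₁)
    (hC₂ : ∀ z ∈ Icc 0 T ×ˢ univ, u₂ z ≤ C₂) (hε : 0 < ε) (ha : 0 < a) (hc : 0 < c) :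
    ∃ z ∈ Icc 0 T ×ˢ univ, ∃ w ∈ Icc 0 T ×ˢ univ,
      (∀ t ∈ Icc 0 T, ∀ x y, doublingFunctional u₁ u₂ η ε a (t, x) (t, y) +
        a / 2 * ((z.1 - w.1) / c) ^ 2 ≤ doublingFunctional u₁ u₂ η ε a z w) ∧
      (0 < z.1 → 0 < w.1 → ∃ X Y, IsDoublingPair a X Y ∧
        2 * η ≤ doubledNonlinearity F₁ F₂ u₁ u₂ ε a z w X Y) := by
  obtain ⟨z, hz, w, hw, hmax⟩ := exists_max_rescaledPenalized (η := η) hT hucont₁ hucont₂ hC₁ hC₂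
    hε ha.le hc
  refine ⟨(c * z.fst, z.snd), ⟨hz, trivial⟩, (c * w.fst, w.snd), ⟨hw, trivial⟩,
    fun t ht x y => ?_, fun hz₀ hw₀ => ?_⟩
  · have hmem : ∀ x : EuclideanSpace ℝ (Fin n), WithLp.toLp 2 (t / c, x) ∈ rescaledSlab n T c :=
      fun x => by simpa [rescaledSlab, mul_div_cancel₀ _ hc.ne'] using ht
    have hle := hmax _ (hmem x) _ (hmem y)
    simp only [rescaledPenalized_add_sub_eq, WithLp.toLp_fst, WithLp.toLp_snd, sub_self,
      mul_div_cancel₀ _ hc.ne'] at hle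
    rw [← mul_sub, mul_div_cancel_left₀ _ hc.ne']
    linarith
  · obtain ⟨X, Y, hX, hY, hXY⟩ := exists_mem_closure_superjetGraph_of_isMax
      (isClosed_rescaledSlab n T c) (continuousOn_rescaledPenalized hucont₁)
      (continuousOn_rescaledPenalized hucont₂) (fun _ => rescaledPenalized_le hε.le hC₁)
      (fun _ => rescaledPenalized_le hε.le hC₂) ha hz hw hmax
    have hle₁ := hu₁.le_of_mem_closure_superjetGraph hF₁ hucont₁ hc hz₀ hX
    have hle₂ := hu₂.le_of_mem_closure_superjetGraph hF₂ hucont₂ hc hw₀ hY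
    refine ⟨sndBlock X, sndBlock Y, hXY.sndBlock, ?_⟩
    simp only [WithLp.smul_fst, WithLp.smul_snd, WithLp.neg_fst, WithLp.neg_snd, WithLp.sub_fst,
      WithLp.sub_snd, neg_div] at hle₁ hle₂
    rw [doubledNonlinearity]
    linarith

lemma doublingFunctional_le (hC₁ : ∀ z ∈ Icc 0 T ×ˢ univ, u₁ z ≤ C₁)
    (hC₂ : ∀ z ∈ Icc 0 T ×ˢ univ, u₂ z ≤ C₂) (ha : 0 ≤ a) {z w : ℝ × EuclideanSpace ℝ (Fin n)}
    (hz : z ∈ Icc 0 T ×ˢ univ) (hw : w ∈ Icc 0 T ×ˢ univ) :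
    doublingFunctional u₁ u₂ η ε a z w ≤
      C₁ + C₂ + 2 * |η| * T - ε * (‖z.2‖ ^ 2 + ‖w.2‖ ^ 2) := by
  have hpen : 0 ≤ a / 2 * ‖z.2 - w.2‖ ^ 2 := by positivity
  have htime : -(|η| * (2 * T)) ≤ η * (z.1 + w.1) := by
    refine neg_le_of_abs_le ?_
    rw [abs_mul, abs_of_nonneg (add_nonneg hz.1.1 hw.1.1)]
    exact mul_le_mul_of_nonneg_left (by linarith [hz.1.2, hw.1.2]) (abs_nonneg η)
  rw [doublingFunctional]
  linarith [hC₁ z hz, hC₂ w hw]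

lemma tendsto_doublingFunctional {ι : Type*} {l : Filter ι}
    {z w : ι → ℝ × EuclideanSpace ℝ (Fin n)} {z₀ w₀ : ℝ × EuclideanSpace ℝ (Fin n)}
    (hz : Tendsto z l (𝓝 z₀)) (hw : Tendsto w l (𝓝 w₀))
    (hu₁ : Tendsto (fun i => u₁ (z i)) l (𝓝 (u₁ z₀)))
    (hu₂ : Tendsto (fun i => u₂ (w i)) l (𝓝 (u₂ w₀))) :
    Tendsto (fun i => doublingFunctional u₁ u₂ η ε a (z i) (w i)) l
      (𝓝 (doublingFunctional u₁ u₂ η ε a z₀ w₀)) :=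
  (((hu₁.add hu₂).sub ((hz.fst_nhds.add hw.fst_nhds).const_mul η)).sub
    (((hz.snd_nhds.norm.pow 2).add (hw.snd_nhds.norm.pow 2)).const_mul ε)).sub
      (((hz.snd_nhds.sub hw.snd_nhds).norm.pow 2).const_mul (a / 2))

lemma tendsto_doubledNonlinearity (hF₁ : IsContinuousNonlinearity F₁)
    (hF₂ : IsContinuousNonlinearity F₂) {ι : Type*} {l : Filter ι}
    {z w : ι → ℝ × EuclideanSpace ℝ (Fin n)} {z₀ w₀ : ℝ × EuclideanSpace ℝ (Fin n)}
    {X Y : ι → EuclideanSpace ℝ (Fin n) →L[ℝ] EuclideanSpace ℝ (Fin n)}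
    {X₀ Y₀ : EuclideanSpace ℝ (Fin n) →L[ℝ] EuclideanSpace ℝ (Fin n)}
    (hz : Tendsto z l (𝓝 z₀)) (hw : Tendsto w l (𝓝 w₀))
    (hu₁ : Tendsto (fun i => u₁ (z i)) l (𝓝 (u₁ z₀)))
    (hu₂ : Tendsto (fun i => u₂ (w i)) l (𝓝 (u₂ w₀)))
    (hX : Tendsto X l (𝓝 X₀)) (hY : Tendsto Y l (𝓝 Y₀)) :
    Tendsto (fun i => doubledNonlinearity F₁ F₂ u₁ u₂ ε a (z i) (w i) (X i) (Y i)) l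
      (𝓝 (doubledNonlinearity F₁ F₂ u₁ u₂ ε a z₀ w₀ X₀ Y₀)) := by
  have hp := (hz.snd_nhds.sub hw.snd_nhds).const_smul a
  exact (hF₁.tendsto hz.fst_nhds hz.snd_nhds hu₁ (hp.add (hz.snd_nhds.const_smul _))
    (hX.add_const _)).add (hF₂.tendsto hw.fst_nhds hw.snd_nhds hu₂
      (hp.neg.add (hw.snd_nhds.const_smul _)) (hY.add_const _))

lemma exists_isDoublingPair_of_tendsto (hF₁ : IsContinuousNonlinearity F₁)
    (hF₂ : IsContinuousNonlinearity F₂) (ha : 0 ≤ a)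
    {z w : ℕ → ℝ × EuclideanSpace ℝ (Fin n)} {z₀ w₀ : ℝ × EuclideanSpace ℝ (Fin n)}
    (hz : Tendsto z atTop (𝓝 z₀)) (hw : Tendsto w atTop (𝓝 w₀))
    (hu₁ : Tendsto (fun i => u₁ (z i)) atTop (𝓝 (u₁ z₀)))
    (hu₂ : Tendsto (fun i => u₂ (w i)) atTop (𝓝 (u₂ w₀))) {κ : ℝ}
    (hjet : ∀ᶠ i in atTop, ∃ X Y, IsDoublingPair a X Y ∧
      κ ≤ doubledNonlinearity F₁ F₂ u₁ u₂ ε a (z i) (w i) X Y) :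
    ∃ X Y, IsDoublingPair a X Y ∧ κ ≤ doubledNonlinearity F₁ F₂ u₁ u₂ ε a z₀ w₀ X Y := by
  obtain ⟨X, hX⟩ := hjet.choice
  obtain ⟨Y, hY⟩ := hX.choice
  obtain ⟨P, hP, φ, hφ, hlim⟩ := (isCompact_setOf_isDoublingPair ha).tendsto_subseq'
    (x := fun i => (X i, Y i)) (hY.mono fun i hi => hi.1).frequently
  refine ⟨P.1, P.2, hP, ge_of_tendsto (tendsto_doubledNonlinearity hF₁ hF₂
    (hz.comp hφ.tendsto_atTop) (hw.comp hφ.tendsto_atTop) (hu₁.comp hφ.tendsto_atTop)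
    (hu₂.comp hφ.tendsto_atTop) hlim.fst_nhds hlim.snd_nhds) ?_⟩
  exact hφ.tendsto_atTop.eventually (hY.mono fun i hi => hi.2)

lemma exists_subseq_tendsto_diagonal {V : Type*} [NormedAddCommGroup V] [ProperSpace V]
    (hε : 0 < ε) (ha : 0 < a) {c : ℕ → ℝ} (hc : Tendsto c atTop (𝓝 0)) (hcpos : ∀ i, 0 < c i)
    {z w : ℕ → ℝ × V} (hz : ∀ i, z i ∈ Icc 0 T ×ˢ univ) (hw : ∀ i, w i ∈ Icc 0 T ×ˢ univ) {K : ℝ}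
    (hK : ∀ i, ε * (‖(z i).2‖ ^ 2 + ‖(w i).2‖ ^ 2) + a / 2 * (((z i).1 - (w i).1) / c i) ^ 2 ≤ K) :
    ∃ t ∈ Icc 0 T, ∃ x y, ∃ φ : ℕ → ℕ, StrictMono φ ∧
      Tendsto (z ∘ φ) atTop (𝓝 (t, x)) ∧ Tendsto (w ∘ φ) atTop (𝓝 (t, y)) := by
  have hspace : ∀ i, ‖(z i).2‖ ^ 2 ≤ K / ε ∧ ‖(w i).2‖ ^ 2 ≤ K / ε := fun i => by
    have hpen : 0 ≤ a / 2 * (((z i).1 - (w i).1) / c i) ^ 2 := by positivity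
    have hz₂ : 0 ≤ ε * ‖(z i).2‖ ^ 2 := by positivity
    have hw₂ : 0 ≤ ε * ‖(w i).2‖ ^ 2 := by positivity
    rw [le_div_iff₀' hε, le_div_iff₀' hε]
    constructor <;> linarith [hK i]
  have htime : ∀ i, ((z i).1 - (w i).1) ^ 2 ≤ 2 * K / a * c i ^ 2 := fun i => by
    have hpen : 0 ≤ ε * (‖(z i).2‖ ^ 2 + ‖(w i).2‖ ^ 2) := by positivity
    rw [← div_le_iff₀ (pow_pos (hcpos i) 2), ← div_pow, le_div_iff₀' ha]
    linarith [hK i]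
  have hQ : IsCompact ((Icc 0 T ×ˢ Metric.closedBall (0 : V) (√(K / ε))) ×ˢ
      (Icc 0 T ×ˢ Metric.closedBall (0 : V) (√(K / ε)))) :=
    (isCompact_Icc.prod (isCompact_closedBall _ _)).prod
      (isCompact_Icc.prod (isCompact_closedBall _ _))
  obtain ⟨⟨⟨t, x⟩, s, y⟩, hq, φ, hφ, hlim⟩ := hQ.tendsto_subseq (x := fun i => (z i, w i))
    fun i => ⟨⟨(hz i).1, mem_closedBall_zero_iff.2 (Real.le_sqrt_of_sq_le (hspace i).1)⟩,
      (hw i).1, mem_closedBall_zero_iff.2 (Real.le_sqrt_of_sq_le (hspace i).2)⟩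
  have hzero : Tendsto (fun i => 2 * K / a * c i ^ 2) atTop (𝓝 0) := by
    simpa using (hc.pow 2).const_mul (2 * K / a)
  have hst : t = s := by
    have hsq := (hlim.fst_nhds.fst_nhds.sub hlim.snd_nhds.fst_nhds).pow 2
    have := le_of_tendsto_of_tendsto' hsq (hzero.comp hφ.tendsto_atTop) fun i => htime (φ i)
    exact sub_eq_zero.1 (pow_eq_zero_iff two_ne_zero |>.1 (this.antisymm (sq_nonneg _)))
  subst hst
  exact ⟨t, hq.1.1, x, y, φ, hφ, hlim.fst_nhds, hlim.snd_nhds⟩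

/-- The doubled maximum principle: penalising the difference of the two times by
`a / 2 * ((t - s) / c) ^ 2` and letting `c → 0` puts the maximum on the diagonal in time. -/
theorem exists_doubling (hT : 0 ≤ T) (hu₁ : IsSubsolution T F₁ u₁)
    (hu₂ : IsSubsolution T F₂ u₂) (hF₁ : IsContinuousNonlinearity F₁)
    (hF₂ : IsContinuousNonlinearity F₂) (hucont₁ : ContinuousOn u₁ (Icc 0 T ×ˢ univ))
    (hucont₂ : ContinuousOn u₂ (Icc 0 T ×ˢ univ)) (hC₁ : ∀ z ∈ Icc 0 T ×ˢ univ, u₁ z ≤ C₁)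
    (hC₂ : ∀ z ∈ Icc 0 T ×ˢ univ, u₂ z ≤ C₂) (hε : 0 < ε) (ha : 0 < a) :
    ∃ t ∈ Icc 0 T, ∃ x y,
      (∀ t' ∈ Icc 0 T, ∀ x' y', doublingFunctional u₁ u₂ η ε a (t', x') (t', y') ≤
        doublingFunctional u₁ u₂ η ε a (t, x) (t, y)) ∧
      (0 < t → ∃ X Y, IsDoublingPair a X Y ∧
        2 * η ≤ doubledNonlinearity F₁ F₂ u₁ u₂ ε a (t, x) (t, y) X Y) := by
  have hpos : ∀ i : ℕ, (0 : ℝ) < 1 / (i + 1) := fun i => Nat.one_div_pos_of_nat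
  choose z hz w hw hmax hjet using fun i => exists_rescaled_doubling (η := η) hT hu₁ hu₂ hF₁ hF₂
    hucont₁ hucont₂ hC₁ hC₂ hε ha (hpos i)
  obtain ⟨t, ht, x, y, φ, -, hlimz, hlimw⟩ := exists_subseq_tendsto_diagonal hε ha
    tendsto_one_div_add_atTop_nhds_zero_nat hpos hz hw
    (K := C₁ + C₂ + 2 * |η| * T - doublingFunctional u₁ u₂ η ε a (0, 0) (0, 0)) fun i => by
      linarith [hmax i 0 ⟨le_rfl, hT⟩ 0 0,
        doublingFunctional_le (η := η) (ε := ε) hC₁ hC₂ ha.le (hz i) (hw i)]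
  have hlimu₁ := (hucont₁ (t, x) ⟨ht, trivial⟩).tendsto.comp
    (tendsto_nhdsWithin_iff.2 ⟨hlimz, .of_forall fun i => hz (φ i)⟩)
  have hlimu₂ := (hucont₂ (t, y) ⟨ht, trivial⟩).tendsto.comp
    (tendsto_nhdsWithin_iff.2 ⟨hlimw, .of_forall fun i => hw (φ i)⟩)
  refine ⟨t, ht, x, y, fun t' ht' x' y' => ?_, fun htpos =>
    exists_isDoublingPair_of_tendsto hF₁ hF₂ ha.le hlimz hlimw hlimu₁ hlimu₂ ?_⟩
  · refine ge_of_tendsto' (tendsto_doublingFunctional hlimz hlimw hlimu₁ hlimu₂) fun i => ?_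
    exact (le_add_of_nonneg_right (by positivity)).trans (hmax (φ i) t' ht' x' y')
  · filter_upwards [hlimz.fst_nhds.eventually (lt_mem_nhds htpos),
      hlimw.fst_nhds.eventually (lt_mem_nhds htpos)] with i hzi hwi
    exact hjet (φ i) hzi hwi

end Doubling

section StructureConditions

open scoped Topology InnerProductSpace

/-- Viscosity supersolutions of `∂ₜu - F = 0` on `(0, T) × ℝⁿ`. -/
def IsSupersolution (T : ℝ) (F : Nonlinearity n) (u : ℝ × EuclideanSpace ℝ (Fin n) → ℝ) : Prop :=
  ∀ ψ : ℝ × EuclideanSpace ℝ (Fin n) → ℝ, ContDiff ℝ 2 ψ → ∀ t₀ ∈ Ioo 0 T, ∀ x₀,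
    IsLocalMinOn (fun q => u q - ψ q) (Ioo 0 T ×ˢ univ) (t₀, x₀) →
    0 ≤ ptDeriv ψ (t₀, x₀) - F t₀ x₀ (u (t₀, x₀)) (pxGrad ψ (t₀, x₀)) (pxHess ψ (t₀, x₀))

/-- The nonlinearity of the equation satisfied by `-u` when `u` solves the equation of `F`. -/
def dualNonlinearity (F : Nonlinearity n) : Nonlinearity n :=
  fun t x r p X => -F t x (-r) (-p) (-X)

/-- Boundedness of a nonlinearity on the sets where `(r, p, X)` is bounded. -/
def IsLocallyBoundedNonlinearity (T : ℝ) (F : Nonlinearity n) : Prop :=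
  ∀ R > (0 : ℝ), ∃ B : ℝ, ∀ t x r p (X : Matrix (Fin n) (Fin n) ℝ),
    t ∈ Icc 0 T → |r| ≤ R → ‖p‖ ≤ R → (∀ i j, |X i j| ≤ R) → |F t x r p X| ≤ B

/-- Uniform continuity of a nonlinearity on the sets where `(r, p, X)` is bounded. -/
def IsLocallyUniformlyContinuousNonlinearity (T : ℝ) (F : Nonlinearity n) : Prop :=
  ∀ R > (0 : ℝ), ∀ δ > (0 : ℝ), ∃ η > (0 : ℝ), ∀ t t' x x' r r' p p'
    (X X' : Matrix (Fin n) (Fin n) ℝ), t ∈ Icc 0 T → t' ∈ Icc 0 T →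
    |r| ≤ R → |r'| ≤ R → ‖p‖ ≤ R → ‖p'‖ ≤ R → (∀ i j, |X i j| ≤ R) → (∀ i j, |X' i j| ≤ R) →
    |t - t'| < η → ‖x - x'‖ < η → |r - r'| < η → ‖p - p'‖ < η → (∀ i j, |X i j - X' i j| < η) →
    |F t x r p X - F t' x' r' p' X'| < δ

/-- Condition (3.14) for values of the solution bounded by `R`, with modulus `θ`. -/
def HasStructureModulus (T : ℝ) (F : Nonlinearity n) (R : ℝ) (θ : ℝ → ℝ) : Prop :=
  ∀ t ∈ Icc 0 T, ∀ (x xt : EuclideanSpace ℝ (Fin n)) (r a : ℝ) (X Y : Matrix (Fin n) (Fin n) ℝ),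
    |r| ≤ R → 0 < a →
    (∀ ξ η : Fin n → ℝ,
      -(3 * a) * ((∑ i, ξ i ^ 2) + ∑ i, η i ^ 2) ≤ ξ ⬝ᵥ X.mulVec ξ - η ⬝ᵥ Y.mulVec η ∧
      ξ ⬝ᵥ X.mulVec ξ - η ⬝ᵥ Y.mulVec η ≤ 3 * a * ∑ i, (ξ i - η i) ^ 2) →
    F t x r (a • (x - xt)) X - F t xt r (a • (x - xt)) Y ≤ θ (a * ‖x - xt‖ ^ 2 + ‖x - xt‖)

variable {T : ℝ} {F F₁ F₂ : Nonlinearity n} {u u₁ u₂ : ℝ × EuclideanSpace ℝ (Fin n) → ℝ}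

lemma IsSupersolution.neg (hu : IsSupersolution T F u) :
    IsSubsolution T (dualNonlinearity F) (-u) := by
  intro ψ hψ t₀ ht₀ x₀ hmax
  have hmin : IsLocalMinOn (fun q => u q - -ψ q) (Ioo 0 T ×ˢ univ) (t₀, x₀) := by
    filter_upwards [hmax] with q hq
    simp only [Pi.neg_apply] at hq
    linarith
  have hfderiv : ∀ q, fderiv ℝ (fun q => -ψ q) q = -fderiv ℝ ψ q := fun q => fderiv_fun_neg
  have hpt : ptDeriv (fun q => -ψ q) (t₀, x₀) = -ptDeriv ψ (t₀, x₀) := by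
    simp only [ptDeriv, hfderiv, _root_.neg_apply]
  have hgrad : pxGrad (fun q => -ψ q) (t₀, x₀) = -pxGrad ψ (t₀, x₀) := by
    ext i
    simp [pxGrad, hfderiv]
  have hhess : pxHess (fun q => -ψ q) (t₀, x₀) = -pxHess ψ (t₀, x₀) := by
    ext i j
    simp only [pxHess, hfderiv, _root_.neg_apply, fderiv_fun_neg, Matrix.neg_apply]
  have h := hu _ hψ.neg t₀ ht₀ x₀ hmin
  rw [hpt, hgrad, hhess] at h
  simp only [dualNonlinearity, Pi.neg_apply, neg_neg]
  linarith

lemma IsContinuousNonlinearity.dual (hF : IsContinuousNonlinearity F) :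
    IsContinuousNonlinearity (dualNonlinearity F) := by
  have hneg : Continuous fun q : ℝ × EuclideanSpace ℝ (Fin n) × ℝ × EuclideanSpace ℝ (Fin n) ×
      Matrix (Fin n) (Fin n) ℝ => (q.1, q.2.1, -q.2.2.1, -q.2.2.2.1, -q.2.2.2.2) := by fun_prop
  exact (Continuous.comp hF hneg).neg

lemma IsLocallyBoundedNonlinearity.dual (hF : IsLocallyBoundedNonlinearity T F) :
    IsLocallyBoundedNonlinearity T (dualNonlinearity F) := fun R hR => by
  obtain ⟨B, hB⟩ := hF R hR
  refine ⟨B, fun t x r p X ht hr hp hX => ?_⟩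
  rw [dualNonlinearity, abs_neg]
  exact hB t x (-r) (-p) (-X) ht (by rwa [abs_neg]) (by rwa [norm_neg]) (by simpa using hX)

lemma IsLocallyUniformlyContinuousNonlinearity.dual
    (hF : IsLocallyUniformlyContinuousNonlinearity T F) :
    IsLocallyUniformlyContinuousNonlinearity T (dualNonlinearity F) := fun R hR δ hδ => by
  obtain ⟨η, hη, h⟩ := hF R hR δ hδ
  refine ⟨η, hη, fun t t' x x' r r' p p' X X' ht ht' hr hr' hp hp' hX hX' htt hxx hrr hpp hXX => ?_⟩
  rw [dualNonlinearity, dualNonlinearity, ← neg_sub', abs_neg]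
  refine h t t' x x' (-r) (-r') (-p) (-p') (-X) (-X') ht ht' ?_ ?_ ?_ ?_ ?_ ?_ htt hxx ?_ ?_ ?_ <;>
    simpa only [abs_neg, norm_neg, ← neg_sub', Matrix.neg_apply]

lemma abs_operatorMatrix_add_smul_id_sub_le
    (X : EuclideanSpace ℝ (Fin n) →L[ℝ] EuclideanSpace ℝ (Fin n)) (c : ℝ) (i j : Fin n) :
    |operatorMatrix (X + c • ContinuousLinearMap.id ℝ _) i j - operatorMatrix X i j| ≤ |c| := by
  have hadd : operatorMatrix (X + c • ContinuousLinearMap.id ℝ _) =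
      operatorMatrix X + operatorMatrix (c • ContinuousLinearMap.id ℝ _) := map_add _ _ _
  rw [hadd, Matrix.add_apply, add_sub_cancel_left]
  calc |operatorMatrix (c • ContinuousLinearMap.id ℝ _) i j|
      ≤ ‖c • ContinuousLinearMap.id ℝ (EuclideanSpace ℝ (Fin n))‖ :=
        abs_operatorMatrix_apply_le _ i j
    _ = |c| * ‖ContinuousLinearMap.id ℝ (EuclideanSpace ℝ (Fin n))‖ := by
        rw [norm_smul, Real.norm_eq_abs]
    _ ≤ |c| := mul_le_of_le_one_right (abs_nonneg c) ContinuousLinearMap.norm_id_le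

/-- The penalty `ε * ‖x‖ ^ 2` stays bounded as `ε → 0`, so its gradient `2 * ε * x` and Hessian
`2 * ε` tend to zero. -/
lemma IsLocallyUniformlyContinuousNonlinearity.eventually_abs_sub_lt
    (hF : IsLocallyUniformlyContinuousNonlinearity T F) {R δ : ℝ} (hR : 0 ≤ R) (hδ : 0 < δ) :
    ∀ᶠ ε in 𝓝[>] (0 : ℝ), ∀ t ∈ Icc 0 T, ∀ (x : EuclideanSpace ℝ (Fin n)) (r : ℝ)
      (p : EuclideanSpace ℝ (Fin n)) (X : EuclideanSpace ℝ (Fin n) →L[ℝ] EuclideanSpace ℝ (Fin n)),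
      |r| ≤ R → ‖p‖ ≤ R → ‖X‖ ≤ R → ε * ‖x‖ ^ 2 ≤ R →
      |F t x r (p + (2 * ε) • x) (operatorMatrix (X + (2 * ε) • ContinuousLinearMap.id ℝ _)) -
        F t x r p (operatorMatrix X)| < δ := by
  obtain ⟨ρ, hρ, h⟩ := hF (R + 1) (by linarith) δ hδ
  have hgrad : Tendsto (fun ε : ℝ => 2 * √(ε * R)) (𝓝[>] 0) (𝓝 0) :=
    tendsto_nhdsWithin_of_tendsto_nhds (Continuous.tendsto' (by fun_prop) _ _ (by simp))
  have hhess : Tendsto (fun ε : ℝ => 2 * ε) (𝓝[>] 0) (𝓝 0) :=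
    tendsto_nhdsWithin_of_tendsto_nhds (Continuous.tendsto' (by fun_prop) _ _ (by simp))
  have hmin : 0 < min ρ 1 := lt_min hρ one_pos
  filter_upwards [self_mem_nhdsWithin, hgrad.eventually (gt_mem_nhds hmin),
    hhess.eventually (gt_mem_nhds hmin)] with ε (hε : 0 < ε) hεg hεh t ht x r p X hr hp hX hx
  have hv : ‖(2 * ε) • x‖ < min ρ 1 := by
    refine lt_of_le_of_lt ?_ hεg
    rw [norm_smul, Real.norm_of_nonneg (by positivity), mul_assoc]
    gcongr
    refine Real.le_sqrt_of_sq_le ?_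
    calc (ε * ‖x‖) ^ 2 = ε * (ε * ‖x‖ ^ 2) := by ring
      _ ≤ ε * R := by gcongr
  have hZ : ∀ i j, |operatorMatrix (X + (2 * ε) • ContinuousLinearMap.id ℝ _) i j
      - operatorMatrix X i j| < min ρ 1 := fun i j => by
    refine (abs_operatorMatrix_add_smul_id_sub_le X (2 * ε) i j).trans_lt ?_
    rwa [abs_of_pos (by positivity)]
  have hXR : ∀ i j, |operatorMatrix X i j| ≤ R := fun i j =>
    (abs_operatorMatrix_apply_le X i j).trans hX
  refine h t t x x r r _ _ _ _ ht ht (by linarith) (by linarith) ?_ (by linarith) (fun i j => ?_)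
    (fun i j => by linarith [hXR i j]) (by simpa) (by simpa) (by simpa) ?_ fun i j => ?_
  · linarith [norm_add_le p ((2 * ε) • x), min_le_right ρ 1]
  · linarith [abs_sub_abs_le_abs_sub (operatorMatrix (X + (2 * ε) • ContinuousLinearMap.id ℝ _) i j)
      (operatorMatrix X i j), hZ i j, hXR i j, min_le_right ρ 1]
  · rw [add_sub_cancel_left]
    exact hv.trans_le (min_le_left ρ 1)
  · exact (hZ i j).trans_le (min_le_left ρ 1)

lemma doubledNonlinearity_zero_left (a : ℝ) (z w : ℝ × EuclideanSpace ℝ (Fin n))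
    (X Y : EuclideanSpace ℝ (Fin n) →L[ℝ] EuclideanSpace ℝ (Fin n)) :
    doubledNonlinearity F₁ F₂ u₁ u₂ 0 a z w X Y =
      F₁ z.1 z.2 (u₁ z) (a • (z.2 - w.2)) (operatorMatrix X) +
        F₂ w.1 w.2 (u₂ w) (-(a • (z.2 - w.2))) (operatorMatrix Y) := by
  have hzero : ∀ Z : EuclideanSpace ℝ (Fin n) →L[ℝ] EuclideanSpace ℝ (Fin n),
      Z + (0 : ℝ) • ContinuousLinearMap.id ℝ (EuclideanSpace ℝ (Fin n)) = Z := fun Z => by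
    ext; simp
  simp only [doubledNonlinearity, mul_zero, hzero, zero_smul, add_zero]

lemma eventually_doubledNonlinearity_lt (hF₁ : IsLocallyUniformlyContinuousNonlinearity T F₁)
    (hF₂ : IsLocallyUniformlyContinuousNonlinearity T F₂) (a : ℝ) {R δ : ℝ} (hR : 0 ≤ R)
    (hδ : 0 < δ) :
    ∀ᶠ ε in 𝓝[>] (0 : ℝ), ∀ t ∈ Icc 0 T, ∀ (x y : EuclideanSpace ℝ (Fin n))
      (X Y : EuclideanSpace ℝ (Fin n) →L[ℝ] EuclideanSpace ℝ (Fin n)),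
      |u₁ (t, x)| ≤ R → |u₂ (t, y)| ≤ R → ‖a • (x - y)‖ ≤ R → ‖X‖ ≤ R → ‖Y‖ ≤ R →
      ε * (‖x‖ ^ 2 + ‖y‖ ^ 2) ≤ R →
      doubledNonlinearity F₁ F₂ u₁ u₂ ε a (t, x) (t, y) X Y <
        doubledNonlinearity F₁ F₂ u₁ u₂ 0 a (t, x) (t, y) X Y + δ := by
  filter_upwards [self_mem_nhdsWithin, hF₁.eventually_abs_sub_lt hR (half_pos hδ),
    hF₂.eventually_abs_sub_lt hR (half_pos hδ)] with ε (hε : 0 < ε) h₁ h₂ t ht x y X Y hx hy hp hX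
      hY hxy
  have hεx : 0 ≤ ε * ‖x‖ ^ 2 := by positivity
  have hεy : 0 ≤ ε * ‖y‖ ^ 2 := by positivity
  have hle₁ := (abs_lt.1 (h₁ t ht x _ _ X hx hp hX (by linarith))).2
  have hle₂ := (abs_lt.1 (h₂ t ht y _ (-(a • (x - y))) Y hy (by rwa [norm_neg]) hY
    (by linarith))).2
  rw [doubledNonlinearity_zero_left, doubledNonlinearity]
  linarith

lemma HasStructureModulus.doubledNonlinearity_le {R a : ℝ} {θ : ℝ → ℝ}
    (hF : HasStructureModulus T F R θ) (hmono : ∀ t x p X, Antitone fun r => F t x r p X)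
    (ha : 0 < a) {t : ℝ} (ht : t ∈ Icc 0 T) {x y : EuclideanSpace ℝ (Fin n)}
    {X Y : EuclideanSpace ℝ (Fin n) →L[ℝ] EuclideanSpace ℝ (Fin n)} (hXY : IsDoublingPair a X Y)
    (huxy : u (t, y) ≤ u (t, x)) (huy : |u (t, y)| ≤ R) :
    doubledNonlinearity F (dualNonlinearity F) u (-u) 0 a (t, x) (t, y) X Y ≤
      θ (a * ‖x - y‖ ^ 2 + ‖x - y‖) := by
  have hmatrix : ∀ ξ η : Fin n → ℝ,
      -(3 * a) * ((∑ i, ξ i ^ 2) + ∑ i, η i ^ 2) ≤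
        ξ ⬝ᵥ operatorMatrix X *ᵥ ξ - η ⬝ᵥ (-operatorMatrix Y) *ᵥ η ∧
      ξ ⬝ᵥ operatorMatrix X *ᵥ ξ - η ⬝ᵥ (-operatorMatrix Y) *ᵥ η ≤
        3 * a * ∑ i, (ξ i - η i) ^ 2 := fun ξ η => by
    have h := hXY.2.2 (WithLp.toLp 2 ξ) (WithLp.toLp 2 η)
    rw [neg_mulVec, dotProduct_neg, sub_neg_eq_add, dotProduct_operatorMatrix_mulVec,
      dotProduct_operatorMatrix_mulVec]
    simpa only [EuclideanSpace.real_norm_sq_eq, ← WithLp.toLp_sub, Pi.sub_apply] using h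
  have hstruct := hF t ht x y (u (t, y)) a _ _ huy ha hmatrix
  have hproper := hmono t x (a • (x - y)) (operatorMatrix X) huxy
  rw [doubledNonlinearity_zero_left, dualNonlinearity, Pi.neg_apply, neg_neg, neg_neg]
  dsimp only at hproper ⊢
  linarith

end StructureConditions

/-- The functions `u (t, ·)`, `t ∈ [0, T]`, share a modulus of continuity, encoded by its quadratic
majorants. -/
def HasSpatialModulus {V : Type*} [SeminormedAddCommGroup V] (T : ℝ) (u : ℝ × V → ℝ) : Prop :=
  ∀ ω > 0, ∃ A ≥ 0, ∀ t ∈ Icc 0 T, ∀ x y, u (t, x) - u (t, y) ≤ ω + A * ‖x - y‖ ^ 2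

/-- The functions `u (·, x)` share a modulus of continuity on `[0, T]`, encoded by its affine
majorants. -/
def HasTimeModulus {V : Type*} (T : ℝ) (u : ℝ × V → ℝ) : Prop :=
  ∀ η > 0, ∃ K ≥ 0, ∀ t₀ t, 0 ≤ t₀ → t₀ ≤ t → t ≤ T → ∀ x,
    |u (t, x) - u (t₀, x)| ≤ η + K * (t - t₀)

section SpatialModulus

open scoped Topology

variable {T C C₁ C₂ η ε σ m a : ℝ} {F : Nonlinearity n} {θ : ℝ → ℝ}
  {u u₁ u₂ : ℝ × EuclideanSpace ℝ (Fin n) → ℝ}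

lemma exists_sub_succ_lt_of_antitone {f : ℕ → ℝ} (hf : Antitone f) (hbdd : BddBelow (range f))
    {τ : ℝ} (hτ : 0 < τ) : ∃ k, f k - f (k + 1) < τ := by
  have hlim := tendsto_atTop_ciInf hf hbdd
  have hdiff : Tendsto (fun k => f k - f (k + 1)) atTop (𝓝 0) := by
    simpa using hlim.sub (hlim.comp (tendsto_add_atTop_nat 1))
  exact (hdiff.eventually (gt_mem_nhds hτ)).exists

/-- The supremum over `[0, T] × ℝⁿ × ℝⁿ` of the doubled functional without the penalty at infinity,
as a function of the weight `a` of the doubling. -/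
noncomputable def doublingSup (T : ℝ) (u₁ u₂ : ℝ × EuclideanSpace ℝ (Fin n) → ℝ) (η a : ℝ) : ℝ :=
  ⨆ q : Icc 0 T × EuclideanSpace ℝ (Fin n) × EuclideanSpace ℝ (Fin n),
    doublingFunctional u₁ u₂ η 0 a (q.1, q.2.1) (q.1, q.2.2)

lemma doublingFunctional_le_doublingSup (hC₁ : ∀ z ∈ Icc 0 T ×ˢ univ, u₁ z ≤ C₁)
    (hC₂ : ∀ z ∈ Icc 0 T ×ˢ univ, u₂ z ≤ C₂) (ha : 0 ≤ a) {t : ℝ} (ht : t ∈ Icc 0 T)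
    (x y : EuclideanSpace ℝ (Fin n)) :
    doublingFunctional u₁ u₂ η 0 a (t, x) (t, y) ≤ doublingSup T u₁ u₂ η a := by
  refine le_ciSup (f := fun q : Icc 0 T × EuclideanSpace ℝ (Fin n) × EuclideanSpace ℝ (Fin n) =>
    doublingFunctional u₁ u₂ η 0 a (q.1, q.2.1) (q.1, q.2.2))
    ⟨C₁ + C₂ + 2 * |η| * T, ?_⟩ (⟨t, ht⟩, x, y)
  rintro _ ⟨q, rfl⟩
  simpa using doublingFunctional_le (η := η) (ε := 0) hC₁ hC₂ ha
    (z := (q.1, q.2.1)) (w := (q.1, q.2.2)) ⟨q.1.2, trivial⟩ ⟨q.1.2, trivial⟩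

lemma doublingSup_anti (hT : 0 ≤ T) (hC₁ : ∀ z ∈ Icc 0 T ×ˢ univ, u₁ z ≤ C₁)
    (hC₂ : ∀ z ∈ Icc 0 T ×ˢ univ, u₂ z ≤ C₂) {b : ℝ} (ha : 0 ≤ a) (hab : a ≤ b) :
    doublingSup T u₁ u₂ η b ≤ doublingSup T u₁ u₂ η a := by
  have : Nonempty (Icc 0 T) := ⟨⟨0, le_rfl, hT⟩⟩
  refine ciSup_le fun q => le_trans ?_
    (doublingFunctional_le_doublingSup hC₁ hC₂ ha q.1.2 q.2.1 q.2.2)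
  unfold doublingFunctional
  gcongr

/-- Halving the weight of the doubling gains a multiple of `‖x - y‖ ^ 2`, so that a small increase
of the supremum forces near-maximisers to have `a * ‖x - y‖ ^ 2` small. -/
lemma mul_norm_sub_sq_le_doublingSup_half_sub (hC₁ : ∀ z ∈ Icc 0 T ×ˢ univ, u₁ z ≤ C₁)
    (hC₂ : ∀ z ∈ Icc 0 T ×ˢ univ, u₂ z ≤ C₂) (hε : 0 ≤ ε) (ha : 0 ≤ a) {t : ℝ}
    (ht : t ∈ Icc 0 T) (x y : EuclideanSpace ℝ (Fin n)) :
    a / 4 * ‖x - y‖ ^ 2 ≤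
      doublingSup T u₁ u₂ η (a / 2) - doublingFunctional u₁ u₂ η ε a (t, x) (t, y) := by
  have hle := doublingFunctional_le_doublingSup (η := η) hC₁ hC₂ (a := a / 2) (by positivity) ht x y
  have hpen : 0 ≤ ε * (‖x‖ ^ 2 + ‖y‖ ^ 2) := by positivity
  simp only [doublingFunctional] at hle ⊢
  linarith

lemma eventually_exists_lt_doublingFunctional (hT : 0 ≤ T) (hm : m < doublingSup T u₁ u₂ η a) :
    ∀ᶠ ε in 𝓝[>] (0 : ℝ), ∃ t ∈ Icc 0 T, ∃ x y,
      m < doublingFunctional u₁ u₂ η ε a (t, x) (t, y) := by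
  have : Nonempty (Icc 0 T) := ⟨⟨0, le_rfl, hT⟩⟩
  obtain ⟨⟨t, x, y⟩, hlt⟩ := exists_lt_of_lt_ciSup hm
  have hcont : Continuous fun ε => doublingFunctional u₁ u₂ η ε a (t, x) (t, y) := by
    unfold doublingFunctional
    fun_prop
  filter_upwards [mem_nhdsWithin_of_mem_nhds (hcont.continuousAt.eventually (lt_mem_nhds hlt))]
    with ε hε
  exact ⟨t, t.2, x, y, hε⟩

lemma lt_sub_of_lt_doublingFunctional (hη : 0 ≤ η) (hε : 0 ≤ ε) (ha : 0 ≤ a) {t : ℝ} (ht : 0 ≤ t)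
    {x y : EuclideanSpace ℝ (Fin n)} (h : m < doublingFunctional u (-u) η ε a (t, x) (t, y)) :
    m < u (t, x) - u (t, y) := by
  have hpen : 0 ≤ ε * (‖x‖ ^ 2 + ‖y‖ ^ 2) := by positivity
  have hdoub : 0 ≤ a / 2 * ‖x - y‖ ^ 2 := by positivity
  have htime : 0 ≤ η * (t + t) := by positivity
  simp only [doublingFunctional, Pi.neg_apply] at h
  linarith

lemma HasStructureModulus.eventually_doubledNonlinearity_lt_modulus
    (hstruct : HasStructureModulus T F C θ)
    (hFuc : IsLocallyUniformlyContinuousNonlinearity T F)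
    (hmono : ∀ t x p X, Antitone fun r => F t x r p X) {K : ℝ} (hC : 0 ≤ C) (ha : 0 < a)
    (hσ : 0 ≤ σ) (hK : 0 ≤ K) (hη : 0 < η) :
    ∀ᶠ ε in 𝓝[>] (0 : ℝ), ∀ t ∈ Icc 0 T, ∀ x y X Y, IsDoublingPair a X Y →
      u (t, y) ≤ u (t, x) → |u (t, x)| ≤ C → |u (t, y)| ≤ C → ‖x - y‖ ≤ σ →
      ε * (‖x‖ ^ 2 + ‖y‖ ^ 2) ≤ K →
      doubledNonlinearity F (dualNonlinearity F) u (-u) ε a (t, x) (t, y) X Y <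
        θ (a * ‖x - y‖ ^ 2 + ‖x - y‖) + η := by
  filter_upwards [eventually_doubledNonlinearity_lt (u₁ := u) (u₂ := -u) hFuc hFuc.dual a
    (R := C + 3 * a + a * σ + K) (by positivity) hη] with ε hε t ht x y X Y hXY hle hx hy hxy hpen
  have haσ : a * ‖x - y‖ ≤ a * σ := by gcongr
  have hR := hε t ht x y X Y (by linarith [mul_nonneg ha.le hσ])
    (by rw [Pi.neg_apply, abs_neg]; linarith [mul_nonneg ha.le hσ])
    (by rw [norm_smul, Real.norm_of_nonneg ha.le]; linarith)
    (by linarith [hXY.norm_fst_le ha.le, mul_nonneg ha.le hσ])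
    (by linarith [hXY.symm.norm_fst_le ha.le, mul_nonneg ha.le hσ])
    (by linarith [mul_nonneg ha.le hσ])
  linarith [hstruct.doubledNonlinearity_le hmono ha ht hXY hle hy]

/-- At a point where the doubled functional exceeds its supremum over the initial time, the two
viscosity inequalities and the structure condition contradict each other. -/
lemma doublingSup_le (hT : 0 ≤ T) (hsub : IsSubsolution T F u) (hsuper : IsSupersolution T F u)
    (hF : IsContinuousNonlinearity F) (hFuc : IsLocallyUniformlyContinuousNonlinearity T F)
    (hmono : ∀ t x p X, Antitone fun r => F t x r p X) (hstruct : HasStructureModulus T F C θ)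
    (hucont : ContinuousOn u (Icc 0 T ×ˢ univ)) (hC : ∀ z ∈ Icc 0 T ×ˢ univ, |u z| ≤ C)
    (hη : 0 < η) (hσ : 0 < σ) (hm : 0 ≤ m) (ha : 1 ≤ a)
    (hinit : ∀ x y, ‖x - y‖ < σ → u (0, x) - u (0, y) ≤ m)
    (hθ : ∀ s ∈ Ioo 0 (σ ^ 2 + σ), θ s < η)
    (hgap : doublingSup T u (-u) η (a / 2) - doublingSup T u (-u) η a < σ ^ 2 / 4) :
    doublingSup T u (-u) η a ≤ m := by
  have ha₀ : 0 < a := one_pos.trans_le ha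
  have hC₁ : ∀ z ∈ Icc 0 T ×ˢ univ, u z ≤ C := fun z hz => (le_abs_self _).trans (hC z hz)
  have hC₂ : ∀ z ∈ Icc 0 T ×ˢ univ, (-u) z ≤ C := fun z hz => (neg_le_abs _).trans (hC z hz)
  have hC₀ : 0 ≤ C := (abs_nonneg _).trans (hC (0, 0) ⟨⟨le_rfl, hT⟩, trivial⟩)
  by_contra! hlt
  obtain ⟨ε, hε, ⟨t', ht', x', y', hlt'⟩, hev⟩ := (eventually_mem_nhdsWithin.and
    ((eventually_exists_lt_doublingFunctional hT (m := max m
      (doublingSup T u (-u) η (a / 2) - σ ^ 2 / 4)) (max_lt hlt (by linarith))).and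
    (hstruct.eventually_doubledNonlinearity_lt_modulus (u := u) hFuc hmono hC₀ ha₀ hσ.le
      (K := C + C + 2 * |η| * T) (by positivity) hη))).exists
  obtain ⟨t, ht, x, y, hmax, hjet⟩ := exists_doubling (η := η) hT hsub hsuper.neg hF hF.dual
    hucont hucont.neg hC₁ hC₂ hε ha₀
  obtain ⟨hltm, hltsup⟩ := max_lt_iff.1 (hlt'.trans_le (hmax t' ht' x' y'))
  have hclose : a * ‖x - y‖ ^ 2 < σ ^ 2 := by
    linarith [mul_norm_sub_sq_le_doublingSup_half_sub (η := η) hC₁ hC₂ hε.le ha₀.le ht x y]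
  have hdist : ‖x - y‖ < σ := lt_of_pow_lt_pow_left₀ 2 hσ.le <|
    (le_mul_of_one_le_left (sq_nonneg _) ha).trans_lt hclose
  have hdiff := lt_sub_of_lt_doublingFunctional hη.le hε.le ha₀.le ht.1 hltm
  have htpos : 0 < t := ht.1.lt_of_ne fun h => (hinit x y hdist).not_gt (h ▸ hdiff)
  have hxy : 0 < ‖x - y‖ := norm_sub_pos_iff.2 fun h => by
    rw [h, sub_self] at hdiff
    exact hm.not_gt hdiff
  obtain ⟨X, Y, hXY, hle⟩ := hjet htpos
  have hpen := doublingFunctional_le (η := η) (ε := ε) hC₁ hC₂ ha₀.le (z := (t, x)) (w := (t, y))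
    ⟨ht, trivial⟩ ⟨ht, trivial⟩
  have hsum := hev t ht x y X Y hXY (by linarith) (hC _ ⟨ht, trivial⟩) (hC _ ⟨ht, trivial⟩)
    hdist.le (by linarith)
  linarith [hθ _ ⟨by positivity, add_lt_add hclose hdist⟩]

theorem IsSubsolution.hasSpatialModulus (hT : 0 ≤ T) (hsub : IsSubsolution T F u)
    (hsuper : IsSupersolution T F u) (hF : IsContinuousNonlinearity F)
    (hFuc : IsLocallyUniformlyContinuousNonlinearity T F)
    (hmono : ∀ t x p X, Antitone fun r => F t x r p X) (hstruct : HasStructureModulus T F C θ)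
    (hθ : Tendsto θ (𝓝[>] 0) (𝓝 0)) (hucont : ContinuousOn u (Icc 0 T ×ˢ univ))
    (hC : ∀ z ∈ Icc 0 T ×ˢ univ, |u z| ≤ C) (hu₀ : UniformContinuous fun x => u (0, x)) :
    HasSpatialModulus T u := fun ω hω => by
  have hC₁ : ∀ z ∈ Icc 0 T ×ˢ univ, u z ≤ C := fun z hz => (le_abs_self _).trans (hC z hz)
  have hC₂ : ∀ z ∈ Icc 0 T ×ˢ univ, (-u) z ≤ C := fun z hz => (neg_le_abs _).trans (hC z hz)
  obtain ⟨η, hη, hηT⟩ : ∃ η > 0, 2 * η * T ≤ ω / 2 := by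
    refine ⟨ω / (4 * (T + 1)), by positivity, ?_⟩
    rw [mul_div_assoc', div_mul_eq_mul_div, div_le_iff₀ (by positivity)]
    linarith
  obtain ⟨δ, hδ, hinit⟩ := Metric.uniformContinuous_iff.1 hu₀ (ω / 2) (half_pos hω)
  obtain ⟨ρ, hρ, hρθ⟩ := mem_nhdsGT_iff_exists_Ioo_subset.1 (hθ.eventually (gt_mem_nhds hη))
  obtain ⟨σ, hσ, hσδ, hσρ⟩ : ∃ σ > 0, σ < δ ∧ σ ^ 2 + σ < ρ := by
    have hlim : Tendsto (fun σ : ℝ => σ ^ 2 + σ) (𝓝[>] 0) (𝓝 0) :=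
      tendsto_nhdsWithin_of_tendsto_nhds (Continuous.tendsto' (by fun_prop) _ _ (by simp))
    exact (eventually_mem_nhdsWithin.and ((eventually_nhdsWithin_of_eventually_nhds
      (gt_mem_nhds hδ)).and (hlim.eventually (gt_mem_nhds hρ)))).exists
  obtain ⟨k, hk⟩ : ∃ k : ℕ, doublingSup T u (-u) η (2 ^ k) - doublingSup T u (-u) η (2 ^ (k + 1)) <
      σ ^ 2 / 4 := by
    refine exists_sub_succ_lt_of_antitone (f := fun k => doublingSup T u (-u) η (2 ^ k))
      (fun i j hij => doublingSup_anti hT hC₁ hC₂ (by positivity)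
        (pow_le_pow_right₀ one_le_two hij)) ⟨0, ?_⟩ (by positivity)
    rintro _ ⟨k, rfl⟩
    simpa [doublingFunctional] using doublingFunctional_le_doublingSup (η := η) (a := 2 ^ k)
      hC₁ hC₂ (by positivity) ⟨le_rfl, hT⟩ 0 0
  have hsup : doublingSup T u (-u) η (2 ^ (k + 1)) ≤ ω / 2 := by
    refine doublingSup_le hT hsub hsuper hF hFuc hmono hstruct hucont hC hη hσ (half_pos hω).le
      (one_le_pow₀ one_le_two) (fun x y hxy => ?_) (fun s hs => hρθ ⟨hs.1, hs.2.trans hσρ⟩) ?_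
    · exact (le_abs_self _).trans (hinit (by rw [dist_eq_norm]; linarith)).le
    · rwa [pow_succ, mul_div_cancel_right₀ _ two_ne_zero]
  refine ⟨2 ^ k, by positivity, fun t ht x y => ?_⟩
  have hle := (doublingFunctional_le_doublingSup hC₁ hC₂ (by positivity) ht x y).trans hsup
  have htime : 2 * η * t ≤ 2 * η * T := by gcongr; exact ht.2
  simp only [doublingFunctional, Pi.neg_apply, pow_succ] at hle
  linarith

end SpatialModulus

section TimeModulus

open scoped Topology InnerProductSpace

variable {T C A K η : ℝ} {F : Nonlinearity n} {u : ℝ × EuclideanSpace ℝ (Fin n) → ℝ}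
  {x₀ : EuclideanSpace ℝ (Fin n)}

lemma mem_parabolicSuperjet_of_isLocalMaxOn {z : ℝ × EuclideanSpace ℝ (Fin n)}
    (hmax : IsLocalMaxOn (fun q => u q - A * ‖q.2 - x₀‖ ^ 2 - K * q.1) (Icc 0 T ×ˢ univ) z) :
    (K, (2 * A) • (z.2 - x₀), (2 * A) • ContinuousLinearMap.id ℝ (EuclideanSpace ℝ (Fin n))) ∈
      parabolicSuperjet T u z := by
  refine ⟨(IsSelfAdjoint.all (2 * A)).smul (.one _), fun κ hκ => ⟨0, ?_⟩⟩
  filter_upwards [hmax] with q hq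
  have hsq : ‖q.2 - x₀‖ ^ 2 = ‖q.2 - z.2‖ ^ 2 + 2 * ⟪z.2 - x₀, q.2 - z.2⟫_ℝ + ‖z.2 - x₀‖ ^ 2 := by
    rw [real_inner_comm, ← norm_add_sq_real, sub_add_sub_cancel]
  have hκsq : 0 ≤ κ * ‖q.2 - z.2‖ ^ 2 := by positivity
  simp only [_root_.smul_apply, ContinuousLinearMap.id_apply, real_inner_smul_left,
    real_inner_self_eq_norm_sq]
  rw [hsq] at hq
  linarith

/-- The spatial modulus keeps the maximum of `u - (A + 1) * ‖x - x₀‖ ^ 2 - K * (t - t₀)` away from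
the initial time, and the boundedness of `u` keeps it in a fixed ball. -/
lemma exists_isLocalMaxOn_of_add_lt (hucont : ContinuousOn u (Icc 0 T ×ˢ univ))
    (hC : ∀ z ∈ Icc 0 T ×ˢ univ, |u z| ≤ C) (hη : 0 ≤ η) (hA : 0 ≤ A) (hK : 0 ≤ K)
    (hmod : ∀ t ∈ Icc 0 T, ∀ x y, u (t, x) - u (t, y) ≤ η + A * ‖x - y‖ ^ 2) {t₀ t : ℝ}
    (ht₀ : 0 ≤ t₀) (htt : t₀ ≤ t) (htT : t ≤ T)
    (hlt : u (t₀, x₀) + η + K * (t - t₀) < u (t, x₀)) :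
    ∃ s ∈ Ioc 0 T, ∃ y ∈ Metric.closedBall x₀ (2 * C + 1), IsLocalMaxOn
      (fun q => u q - (A + 1) * ‖q.2 - x₀‖ ^ 2 - K * q.1) (Icc 0 T ×ˢ univ) (s, y) := by
  have hbound : ∀ s ∈ Icc 0 T, ∀ x, |u (s, x)| ≤ C := fun s hs x => hC _ ⟨hs, trivial⟩
  have ht₀T : t₀ ∈ Icc 0 T := ⟨ht₀, htt.trans htT⟩
  have hC₀ : 0 ≤ C := (abs_nonneg _).trans (hbound t₀ ht₀T x₀)
  have hsubset : Icc t₀ T ×ˢ Metric.closedBall x₀ (2 * C + 1) ⊆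
      Icc 0 T ×ˢ (univ : Set (EuclideanSpace ℝ (Fin n))) :=
    prod_mono (Icc_subset_Icc_left ht₀) (subset_univ _)
  have htQ : (t, x₀) ∈ Icc t₀ T ×ˢ Metric.closedBall x₀ (2 * C + 1) :=
    ⟨⟨htt, htT⟩, Metric.mem_closedBall_self (by positivity)⟩
  obtain ⟨⟨s, y⟩, hsy, hmax⟩ := (isCompact_Icc.prod (isCompact_closedBall x₀ _)).exists_isMaxOn
    ⟨_, htQ⟩ (f := fun q => u q - (A + 1) * ‖q.2 - x₀‖ ^ 2 - K * q.1)
    (((hucont.mono hsubset).sub (by fun_prop)).sub (by fun_prop))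
  have hsT : s ∈ Icc 0 T := (hsubset hsy).1
  have hvalue : u (t₀, x₀) + η - K * t₀ < u (s, y) - (A + 1) * ‖y - x₀‖ ^ 2 - K * s := by
    have := hmax htQ
    simp only [mem_ofPred_eq, sub_self, norm_zero] at this
    linarith
  have hts : t₀ < s := hsy.1.1.lt_of_ne fun h : t₀ = s => by
    subst h
    linarith [hmod t₀ ht₀T y x₀, sq_nonneg ‖y - x₀‖]
  have hKs : K * t₀ ≤ K * s := by gcongr
  have hball : ‖y - x₀‖ < 2 * C + 1 := by
    have hAsq : 0 ≤ A * ‖y - x₀‖ ^ 2 := by positivity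
    have hsq : ‖y - x₀‖ ^ 2 < 2 * C + 1 := by
      linarith [neg_le_of_abs_le (hbound t₀ ht₀T x₀), le_of_abs_le (hbound s hsT y)]
    nlinarith
  refine ⟨s, ⟨ht₀.trans_lt hts, hsT.2⟩, y, hsy.2, ?_⟩
  have hnhds : Ioi t₀ ×ˢ Metric.ball x₀ (2 * C + 1) ∈ 𝓝 (s, y) :=
    prod_mem_nhds (Ioi_mem_nhds hts) (Metric.isOpen_ball.mem_nhds (mem_ball_iff_norm.2 hball))
  filter_upwards [self_mem_nhdsWithin, mem_nhdsWithin_of_mem_nhds hnhds] with q hqT hq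
  exact hmax ⟨⟨hq.1.le, hqT.1.2⟩, Metric.ball_subset_closedBall hq.2⟩

theorem IsSubsolution.exists_forall_sub_le_add_mul (hu : IsSubsolution T F u)
    (hF : IsContinuousNonlinearity F) (hFbdd : IsLocallyBoundedNonlinearity T F)
    (hucont : ContinuousOn u (Icc 0 T ×ˢ univ)) (hC : ∀ z ∈ Icc 0 T ×ˢ univ, |u z| ≤ C)
    (hη : 0 ≤ η) (hA : 0 ≤ A)
    (hmod : ∀ t ∈ Icc 0 T, ∀ x y, u (t, x) - u (t, y) ≤ η + A * ‖x - y‖ ^ 2) :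
    ∃ K ≥ 0, ∀ t₀ t, 0 ≤ t₀ → t₀ ≤ t → t ≤ T → ∀ x₀,
      u (t, x₀) - u (t₀, x₀) ≤ η + K * (t - t₀) := by
  obtain ⟨B, hB⟩ := hFbdd (|C| + 2 * (A + 1) * (2 * |C| + 1) + 2 * (A + 1)) (by positivity)
  refine ⟨|B| + 1, by positivity, fun t₀ t ht₀ htt htT x₀ => ?_⟩
  by_contra! hlt
  obtain ⟨s, hs, y, hy, hmax⟩ := exists_isLocalMaxOn_of_add_lt (x₀ := x₀) (K := |B| + 1) hucont hC
    hη hA (by positivity) hmod ht₀ htt htT (by linarith)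
  have hjet := hu.le_of_mem_parabolicSuperjet hF hucont hs
    (mem_parabolicSuperjet_of_isLocalMaxOn hmax)
  have husy := hC (s, y) ⟨Ioc_subset_Icc_self hs, trivial⟩
  have hp : ‖(2 * (A + 1)) • (y - x₀)‖ ≤ 2 * (A + 1) * (2 * |C| + 1) := by
    rw [norm_smul, Real.norm_of_nonneg (by positivity)]
    gcongr
    linarith [mem_closedBall_iff_norm.1 hy, le_abs_self C]
  have hX : ‖(2 * (A + 1)) • ContinuousLinearMap.id ℝ (EuclideanSpace ℝ (Fin n))‖ ≤
      2 * (A + 1) := by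
    rw [norm_smul, Real.norm_of_nonneg (by positivity)]
    exact mul_le_of_le_one_right (by positivity) ContinuousLinearMap.norm_id_le
  have hAC : 0 ≤ 2 * (A + 1) * (2 * |C| + 1) := by positivity
  have hle := hB s y (u (s, y)) ((2 * (A + 1)) • (y - x₀)) (operatorMatrix _)
    (Ioc_subset_Icc_self hs) (by linarith [le_abs_self C])
    (hp.trans (by linarith [abs_nonneg C])) fun i j =>
      (abs_operatorMatrix_apply_le _ i j).trans (hX.trans (by linarith [abs_nonneg C]))
  linarith [le_of_abs_le hle, le_abs_self B]

theorem HasSpatialModulus.hasTimeModulus (hspace : HasSpatialModulus T u)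
    (hsub : IsSubsolution T F u) (hsuper : IsSupersolution T F u)
    (hF : IsContinuousNonlinearity F) (hFbdd : IsLocallyBoundedNonlinearity T F)
    (hucont : ContinuousOn u (Icc 0 T ×ˢ univ)) (hC : ∀ z ∈ Icc 0 T ×ˢ univ, |u z| ≤ C) :
    HasTimeModulus T u := fun η hη => by
  obtain ⟨A, hA, hmod⟩ := hspace η hη
  obtain ⟨K₁, hK₁, h₁⟩ := hsub.exists_forall_sub_le_add_mul hF hFbdd hucont hC hη.le hA hmod
  obtain ⟨K₂, -, h₂⟩ := hsuper.neg.exists_forall_sub_le_add_mul hF.dual hFbdd.dual hucont.neg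
    (by simpa using hC) hη.le hA fun t ht x y => by
      rw [Pi.neg_apply, Pi.neg_apply, neg_sub_neg, norm_sub_rev]
      exact hmod t ht y x
  refine ⟨max K₁ K₂, le_max_of_le_left hK₁, fun t₀ t ht₀ htt htT x => abs_sub_le_iff.2 ⟨?_, ?_⟩⟩
  · refine (h₁ t₀ t ht₀ htt htT x).trans ?_
    gcongr
    exact le_max_left _ _
  · rw [← neg_sub_neg]
    refine (h₂ t₀ t ht₀ htt htT x).trans ?_
    gcongr
    exact le_max_right _ _

theorem HasSpatialModulus.uniformContinuousOn {V : Type*} [SeminormedAddCommGroup V]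
    {u : ℝ × V → ℝ} (hspace : HasSpatialModulus T u) (htime : HasTimeModulus T u) :
    UniformContinuousOn u (Icc 0 T ×ˢ univ) := by
  refine Metric.uniformContinuousOn_iff.2 fun ε hε => ?_
  obtain ⟨A, hA, hmod⟩ := hspace (ε / 4) (by positivity)
  obtain ⟨K, hK, hlip⟩ := htime (ε / 4) (by positivity)
  obtain ⟨δ, hδ, hsmall⟩ : ∃ δ > 0, A * δ ^ 2 + K * δ < ε / 2 := by
    have hlim : Tendsto (fun δ : ℝ => A * δ ^ 2 + K * δ) (𝓝[>] 0) (𝓝 0) :=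
      tendsto_nhdsWithin_of_tendsto_nhds (Continuous.tendsto' (by fun_prop) _ _ (by simp))
    exact (eventually_mem_nhdsWithin.and (hlim.eventually (gt_mem_nhds (half_pos hε)))).exists
  refine ⟨δ, hδ, fun ⟨t, x⟩ ⟨ht, _⟩ ⟨s, y⟩ ⟨hs, _⟩ hdist => ?_⟩
  obtain ⟨hts, hxy⟩ := max_lt_iff.1 hdist
  rw [Real.dist_eq] at hts ⊢
  rw [dist_eq_norm] at hxy
  have hspace_le : |u (t, x) - u (t, y)| ≤ ε / 4 + A * δ ^ 2 := by
    have hsq : A * ‖x - y‖ ^ 2 ≤ A * δ ^ 2 := by gcongr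
    refine abs_sub_le_iff.2 ⟨by linarith [hmod t ht x y], ?_⟩
    linarith [norm_sub_rev x y ▸ hmod t ht y x]
  have htime_le : |u (t, y) - u (s, y)| ≤ ε / 4 + K * δ := by
    have hmul : K * |t - s| ≤ K * δ := by gcongr
    rcases le_total t s with h | h
    · rw [abs_sub_comm, abs_of_nonneg (sub_nonneg.2 h)] at hmul
      rw [abs_sub_comm]
      linarith [hlip t s ht.1 h hs.2 y]
    · rw [abs_of_nonneg (sub_nonneg.2 h)] at hmul
      linarith [hlip s t hs.1 h ht.2 y]
  linarith [abs_sub_le (u (t, x)) (u (t, y)) (u (s, y))]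

end TimeModulus

/-- if `u ∈ BC([0,T]×ℝⁿ)` is a viscosity solution of `∂ₜu - F = 0` on
`(0,T)×ℝⁿ` with `u(0,·) ∈ BUC(ℝⁿ)`, where `F` satisfies the structural conditions
(properness `γ ≥ 0`, condition (3.14), degenerate ellipticity) and is bounded and
uniformly continuous on sets where `(u,p,X)` remain bounded, then
`u ∈ BUC([0,T]×ℝⁿ)`; moreover for each `η > 0` there are constants `C(η), K(η)`,
independent of `(t₀,x₀)`, with `|u(t,x₀) - u(t₀,x₀)| ≤ η + K(η)(t-t₀)` for all
`0 ≤ t₀ ≤ t ≤ T` and all `x₀`. -/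
theorem stmt19 (T : ℝ) (hT : 0 < T)
    (F : ℝ → EuclideanSpace ℝ (Fin n) → ℝ → EuclideanSpace ℝ (Fin n) →
      Matrix (Fin n) (Fin n) ℝ → ℝ)
    (hFcont : Continuous (fun q : ℝ × EuclideanSpace ℝ (Fin n) × ℝ ×
      EuclideanSpace ℝ (Fin n) × Matrix (Fin n) (Fin n) ℝ =>
        F q.1 q.2.1 q.2.2.1 q.2.2.2.1 q.2.2.2.2))
    (hFell : ∀ t x r p (X Y : Matrix (Fin n) (Fin n) ℝ), (Y - X).PosSemidef →
      F t x r p X ≤ F t x r p Y)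
    (γ : ℝ) (hγ : 0 ≤ γ)
    (hFproper : ∀ t x p X r s, s ≤ r → γ * (r - s) ≤ F t x s p X - F t x r p X)
    -- structural condition (3.14) of the User's Guide, with modulus `θ_R`:
    (hFstruct : ∀ R > (0:ℝ), ∃ θ : ℝ → ℝ, (∀ s, 0 ≤ θ s) ∧
      Tendsto θ (nhdsWithin 0 (Set.Ioi 0)) (nhds 0) ∧
      ∀ t ∈ Set.Icc 0 T, ∀ (x xt : EuclideanSpace ℝ (Fin n)) (r a : ℝ)
        (X Y : Matrix (Fin n) (Fin n) ℝ), |r| ≤ R → 0 < a →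
        (∀ ξ η : Fin n → ℝ,
          -(3 * a) * ((∑ i, ξ i ^ 2) + ∑ i, η i ^ 2)
              ≤ ξ ⬝ᵥ X.mulVec ξ - η ⬝ᵥ Y.mulVec η ∧
          ξ ⬝ᵥ X.mulVec ξ - η ⬝ᵥ Y.mulVec η ≤ 3 * a * ∑ i, (ξ i - η i) ^ 2) →
        F t x r (a • (x - xt)) X - F t xt r (a • (x - xt)) Y
          ≤ θ (a * ‖x - xt‖ ^ 2 + ‖x - xt‖))
    -- `F` bounded on sets where `(u,p,X)` remain bounded:
    (hFbdd : ∀ R > (0:ℝ), ∃ B : ℝ, ∀ t x r p (X : Matrix (Fin n) (Fin n) ℝ),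
      t ∈ Set.Icc 0 T → |r| ≤ R → ‖p‖ ≤ R → (∀ i j, |X i j| ≤ R) →
      |F t x r p X| ≤ B)
    -- `F` uniformly continuous on sets where `(u,p,X)` remain bounded:
    (hFuc : ∀ R > (0:ℝ), ∀ δ > (0:ℝ), ∃ η > (0:ℝ), ∀ t t' x x' r r' p p'
      (X X' : Matrix (Fin n) (Fin n) ℝ),
      t ∈ Set.Icc 0 T → t' ∈ Set.Icc 0 T →
      |r| ≤ R → |r'| ≤ R → ‖p‖ ≤ R → ‖p'‖ ≤ R →
      (∀ i j, |X i j| ≤ R) → (∀ i j, |X' i j| ≤ R) →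
      |t - t'| < η → ‖x - x'‖ < η → |r - r'| < η → ‖p - p'‖ < η →
      (∀ i j, |X i j - X' i j| < η) →
      |F t x r p X - F t' x' r' p' X'| < δ)
    (u : ℝ × EuclideanSpace ℝ (Fin n) → ℝ)
    (hub : ∃ C, ∀ p, |u p| ≤ C)
    (hucont : ContinuousOn u (Set.Icc 0 T ×ˢ Set.univ))
    -- `u` is a viscosity subsolution on `(0,T)×ℝⁿ`:
    (hsub : ∀ ψ : ℝ × EuclideanSpace ℝ (Fin n) → ℝ, ContDiff ℝ 2 ψ →
      ∀ t₀ ∈ Set.Ioo 0 T, ∀ x₀,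
      IsLocalMaxOn (fun q => u q - ψ q) (Set.Ioo 0 T ×ˢ Set.univ) (t₀, x₀) →
      ptDeriv ψ (t₀, x₀) - F t₀ x₀ (u (t₀, x₀)) (pxGrad ψ (t₀, x₀)) (pxHess ψ (t₀, x₀)) ≤ 0)
    -- `u` is a viscosity supersolution on `(0,T)×ℝⁿ`:
    (hsuper : ∀ ψ : ℝ × EuclideanSpace ℝ (Fin n) → ℝ, ContDiff ℝ 2 ψ →
      ∀ t₀ ∈ Set.Ioo 0 T, ∀ x₀,
      IsLocalMinOn (fun q => u q - ψ q) (Set.Ioo 0 T ×ˢ Set.univ) (t₀, x₀) →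
      0 ≤ ptDeriv ψ (t₀, x₀) -
        F t₀ x₀ (u (t₀, x₀)) (pxGrad ψ (t₀, x₀)) (pxHess ψ (t₀, x₀)))
    (hu0 : UniformContinuous (fun x => u (0, x))) :
    (∀ ε > (0:ℝ), ∃ δ > (0:ℝ), ∀ t ∈ Set.Icc 0 T, ∀ t' ∈ Set.Icc 0 T,
      ∀ x x' : EuclideanSpace ℝ (Fin n), |t - t'| < δ → ‖x - x'‖ < δ →
      |u (t, x) - u (t', x')| < ε) ∧
    (∀ η > (0:ℝ), ∃ K : ℝ, ∀ t₀ t : ℝ, 0 ≤ t₀ → t₀ ≤ t → t ≤ T →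
      ∀ x₀ : EuclideanSpace ℝ (Fin n),
      |u (t, x₀) - u (t₀, x₀)| ≤ η + K * (t - t₀)) := by
  obtain ⟨C, hC⟩ := hub
  have hbound : ∀ z ∈ Icc 0 T ×ˢ univ, |u z| ≤ |C| + 1 := fun z _ => by
    linarith [hC z, le_abs_self C]
  obtain ⟨θ, -, hθ, hstruct⟩ := hFstruct (|C| + 1) (by positivity)
  have hmono : ∀ t x p X, Antitone fun r => F t x r p X := fun t x p X s r hsr =>
    sub_nonneg.1 ((mul_nonneg hγ (sub_nonneg.2 hsr)).trans (hFproper t x p X r s hsr))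
  have hspace : HasSpatialModulus T u := IsSubsolution.hasSpatialModulus hT.le hsub hsuper hFcont
    hFuc hmono hstruct hθ hucont hbound hu0
  have htime : HasTimeModulus T u := hspace.hasTimeModulus hsub hsuper hFcont hFbdd hucont hbound
  refine ⟨fun ε hε => ?_, fun η hη => (htime η hη).imp fun K hK => hK.2⟩
  obtain ⟨δ, hδ, h⟩ := Metric.uniformContinuousOn_iff.1 (hspace.uniformContinuousOn htime) ε hε
  exact ⟨δ, hδ, fun t ht t' ht' x x' htt hxx => h (t, x) ⟨ht, trivial⟩ (t', x') ⟨ht', trivial⟩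
    (max_lt htt (by rwa [dist_eq_norm]))⟩
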